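/- arXiv:2408.13794 — 9 statements merged into one kernel-verified Lean document; each statement's English description precedes it below -/
import Mathlib

section
/- Let d be a positive real number and define, for the Liénard equation y'' + f(y)y' + g(y) = 0 with f(y) = (2+d)y and g(y) = y + d·y³, the Sabatini function τ(y) = (∫₀^y s·f(s) ds)² − y³·(g(y) − g'(0)·y). Then τ(y) = y⁶·((2+d)²/9 − d) for all y, and τ(y) = 0 for all y if and only if d = 1 or d = 4. -/
/-!
A damping `a yᵐ` and a nonlinear restoring term `c y²ᵐ⁺¹` are balanced: both terms of the Sabatini
function are then homogeneous of degree `2m + 4`, so it vanishes identically exactly when its single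
coefficient does. For the Euler–Poisson equation (`m = 1`, `a = 2 + d`, `c = d`), this condition is
`(d - 1) * (d - 4) = 0`.
-/

/-- The Sabatini function of the Liénard equation `y'' + f(y) y' + g(y) = 0`. For `f` and `g` odd
and analytic with `g'(0) > 0`, it vanishes identically if and only if the origin is an isochronous
center. The definition allows arbitrary `f` and `g`: `g'(0)` is read as `0` if `g` is not
differentiable at `0`, and the integral as `0` if its integrand is not integrable. -/
noncomputable def sabatiniFunction (f g : ℝ → ℝ) (y : ℝ) : ℝ :=
  (∫ s in (0 : ℝ)..y, s * f s) ^ 2 - y ^ 3 * (g y - deriv g 0 * y)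

theorem deriv_const_mul_add_const_mul_pow_zero {𝕜 : Type*} [NontriviallyNormedField 𝕜]
    (b c : 𝕜) {n : ℕ} (hn : 2 ≤ n) : deriv (fun y : 𝕜 => b * y + c * y ^ n) 0 = b := by
  have h : HasDerivAt (fun y : 𝕜 => b * y + c * y ^ n) (b * 1 + c * (n * 0 ^ (n - 1))) 0 :=
    ((hasDerivAt_id' 0).const_mul b).fun_add ((hasDerivAt_pow n 0).const_mul c)
  rw [h.deriv, zero_pow (by lia), mul_zero, mul_zero, add_zero, mul_one]

theorem integral_mul_const_mul_pow (a y : ℝ) (m : ℕ) :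
    ∫ s in (0 : ℝ)..y, s * (a * s ^ m) = a * y ^ (m + 2) / (m + 2) := by
  calc ∫ s in (0 : ℝ)..y, s * (a * s ^ m)
      = ∫ s in (0 : ℝ)..y, a * s ^ (m + 1) := by congr 1; ext s; ring
    _ = a * ((y ^ (m + 1 + 1) - 0 ^ (m + 1 + 1)) / ((m + 1 : ℕ) + 1)) := by
      rw [intervalIntegral.integral_const_mul, integral_pow]
    _ = a * y ^ (m + 2) / (m + 2) := by
      rw [zero_pow (by lia)]
      push_cast
      ring

theorem sabatiniFunction_const_mul_pow (a b c : ℝ) {m : ℕ} (hm : m ≠ 0) (y : ℝ) :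
    sabatiniFunction (fun y => a * y ^ m) (fun y => b * y + c * y ^ (2 * m + 1)) y =
      y ^ (2 * m + 4) * (a ^ 2 / (m + 2) ^ 2 - c) := by
  rw [sabatiniFunction, integral_mul_const_mul_pow,
    deriv_const_mul_add_const_mul_pow_zero b c (by lia), div_pow]
  ring

theorem sabatiniFunction_const_mul_pow_eq_zero_iff (a b c : ℝ) {m : ℕ} (hm : m ≠ 0) :
    (∀ y, sabatiniFunction (fun y => a * y ^ m) (fun y => b * y + c * y ^ (2 * m + 1)) y = 0) ↔
      a ^ 2 = c * (m + 2) ^ 2 := by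
  have hm' : ((m : ℝ) + 2) ^ 2 ≠ 0 := by positivity
  simp only [sabatiniFunction_const_mul_pow a b c hm, ← div_eq_iff hm']
  exact ⟨fun h => by simpa [sub_eq_zero] using h 1, fun h y => by rw [h, sub_self, mul_zero]⟩

theorem two_add_sq_eq_mul_three_sq_iff {R : Type*} [CommRing R] [NoZeroDivisors R] (d : R) :
    (2 + d) ^ 2 = d * 3 ^ 2 ↔ d = 1 ∨ d = 4 := by
  have hfactor : (2 + d) ^ 2 - d * 3 ^ 2 = (d - 1) * (d - 4) := by ring
  rw [← sub_eq_zero, hfactor, mul_eq_zero, sub_eq_zero, sub_eq_zero]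

/-- For the Liénard equation `y'' + f(y)y' + g(y) = 0` with
`f(y) = (2+d)y` and `g(y) = y + d·y³` (`d > 0`), the Sabatini function
`τ(y) = (∫₀^y s·f(s) ds)² − y³·(g(y) − g'(0)·y)` satisfies
`τ(y) = y⁶·((2+d)²/9 − d)` for all `y`, and `τ ≡ 0` iff `d = 1` or `d = 4`. -/
theorem sabatini_function_euler_poisson
    (d : ℝ) (hd : 0 < d)
    (f g τ : ℝ → ℝ)
    (hf : ∀ y, f y = (2 + d) * y)
    (hg : ∀ y, g y = y + d * y ^ 3)
    (hτ : ∀ y, τ y = (∫ s in (0:ℝ)..y, s * f s) ^ 2 - y ^ 3 * (g y - deriv g 0 * y)) :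
    (∀ y, τ y = y ^ 6 * ((2 + d) ^ 2 / 9 - d)) ∧
    ((∀ y, τ y = 0) ↔ d = 1 ∨ d = 4) := by
  have hf' : f = fun y => (2 + d) * y ^ 1 := by simpa only [pow_one] using funext hf
  have hg' : g = fun y => 1 * y + d * y ^ (2 * 1 + 1) := by simpa only [one_mul] using funext hg
  obtain rfl : τ = sabatiniFunction f g := funext hτ
  have hthree : ((1 : ℕ) : ℝ) + 2 = 3 := by norm_num
  rw [hf', hg']
  constructor
  · intro y
    rw [sabatiniFunction_const_mul_pow _ _ _ one_ne_zero, hthree]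
    norm_num
  · rw [sabatiniFunction_const_mul_pow_eq_zero_iff _ _ _ one_ne_zero, hthree,
      two_add_sq_eq_mul_three_sq_iff]
end

section
/- Let (F,G) : I → ℝ² be a C¹ solution on an interval I of the system G' = F − 4FG, F' = −F² − G with G(t) < 1/4 for all t ∈ I. Then the function t ↦ (1 − 2G(t) + 2F(t)²) / (2·√(1 − 4G(t))) is constant on I; equivalently, F(t)² = (2G(t) − 1)/2 + C₄·√(1 − 4G(t)) for all t ∈ I, where C₄ = (1 − 2G(t₀) + 2F(t₀)²)/(2√(1 − 4G(t₀))) for any fixed t₀ ∈ I. -/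
/-!
In dimension `d` the system reads `G' = F - d F G`, `F' = -F² - G`. Then `1 - d G` has logarithmic
derivative `-d F`, so `(1 - d G) ^ (2 / d)` has logarithmic derivative `-2 F`. The combination
`1 - 2 G + (d - 2) F²` also has logarithmic derivative `-2 F`, hence the quotient of the two is
conserved. For `d = 4` the power is a square root.
-/

/-- The first integral of the radial Euler–Poisson system `G' = F - d F G`, `F' = -F² - G` in
dimension `d`, as a function of the state `(f, g) = (F t, G t)`. The dimension is a real parameter;
the formula is meaningful for `d ≠ 0` and positive density, `d * g < 1`. -/
noncomputable def radialFirstIntegral (d f g : ℝ) : ℝ :=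
  (1 - 2 * g + (d - 2) * f ^ 2) / (1 - d * g) ^ (2 / d)

section LinearEquation

theorem div_eq_div_of_hasDerivWithinAt_mul_self {𝕜 : Type*} [RCLike 𝕜] {s : Set 𝕜}
    (hs : Convex ℝ s) {a u v : 𝕜 → 𝕜}
    (hu : ∀ x ∈ s, HasDerivWithinAt u (a x * u x) s x)
    (hv : ∀ x ∈ s, HasDerivWithinAt v (a x * v x) s x)
    (hv₀ : ∀ x ∈ s, v x ≠ 0) {x y : 𝕜} (hx : x ∈ s) (hy : y ∈ s) :
    u x / v x = u y / v y := by
  have hderiv : ∀ z ∈ s, HasDerivWithinAt (fun z ↦ u z / v z) 0 s z := fun z hz ↦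
    ((hu z hz).fun_div (hv z hz) (hv₀ z hz)).congr_deriv (by ring)
  have hbound := hs.norm_image_sub_le_of_norm_hasDerivWithin_le hderiv
    (fun _ _ ↦ norm_zero.le) hy hx
  rwa [zero_mul, norm_le_zero_iff, sub_eq_zero] at hbound

theorem hasDerivWithinAt_rpow_const_of_mul_self {u : ℝ → ℝ} {a p t : ℝ} {s : Set ℝ}
    (hu : HasDerivWithinAt u (a * u t) s t) (hu₀ : u t ≠ 0) :
    HasDerivWithinAt (fun t ↦ u t ^ p) (p * a * u t ^ p) s t := by
  refine (hu.rpow_const (Or.inl hu₀)).congr_deriv ?_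
  rw [Real.rpow_sub_one hu₀]
  field_simp

end LinearEquation

section RadialSystem

variable {d t : ℝ} {I : Set ℝ} {F G : ℝ → ℝ}

theorem hasDerivWithinAt_one_sub_mul (hG : HasDerivWithinAt G (F t - d * F t * G t) I t) :
    HasDerivWithinAt (fun t ↦ 1 - d * G t) (-(d * F t) * (1 - d * G t)) I t :=
  ((hG.const_mul d).const_sub 1).congr_deriv (by ring)

theorem hasDerivWithinAt_one_sub_mul_rpow (hd : d ≠ 0)
    (hG : HasDerivWithinAt G (F t - d * F t * G t) I t) (hGd : d * G t ≠ 1) :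
    HasDerivWithinAt (fun t ↦ (1 - d * G t) ^ (2 / d))
      (-2 * F t * (1 - d * G t) ^ (2 / d)) I t := by
  refine (hasDerivWithinAt_rpow_const_of_mul_self (hasDerivWithinAt_one_sub_mul hG)
    (sub_ne_zero.mpr hGd.symm)).congr_deriv ?_
  field_simp

theorem hasDerivWithinAt_one_sub_two_mul_add_sq
    (hG : HasDerivWithinAt G (F t - d * F t * G t) I t)
    (hF : HasDerivWithinAt F (-(F t) ^ 2 - G t) I t) :
    HasDerivWithinAt (fun t ↦ 1 - 2 * G t + (d - 2) * F t ^ 2)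
      (-2 * F t * (1 - 2 * G t + (d - 2) * F t ^ 2)) I t := by
  refine (((hG.const_mul 2).const_sub 1).fun_add
    ((hF.fun_pow 2).const_mul (d - 2))).congr_deriv ?_
  push_cast
  ring

end RadialSystem

theorem radialFirstIntegral_mul_rpow {d g : ℝ} (f : ℝ) (hg : d * g < 1) :
    radialFirstIntegral d f g * (1 - d * g) ^ (2 / d) = 1 - 2 * g + (d - 2) * f ^ 2 :=
  div_mul_cancel₀ _ (Real.rpow_pos_of_pos (sub_pos.mpr hg) _).ne'

theorem rpow_two_div_four (x : ℝ) : x ^ (2 / 4 : ℝ) = √x := by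
  rw [Real.sqrt_eq_rpow]
  norm_num

theorem radialFirstIntegral_four_div_two (f g : ℝ) :
    radialFirstIntegral 4 f g / 2 = (1 - 2 * g + 2 * f ^ 2) / (2 * √(1 - 4 * g)) := by
  rw [radialFirstIntegral, rpow_two_div_four]
  ring

theorem first_integral_d4_general {d : ℝ} (hd : d ≠ 0) {I : Set ℝ} (hI : I.OrdConnected)
    {F G : ℝ → ℝ}
    (hG : ∀ t ∈ I, HasDerivWithinAt G (F t - d * F t * G t) I t)
    (hF : ∀ t ∈ I, HasDerivWithinAt F (-(F t) ^ 2 - G t) I t)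
    (hGd : ∀ t ∈ I, d * G t < 1) :
    (∀ t₁ ∈ I, ∀ t₂ ∈ I,
      radialFirstIntegral d (F t₁) (G t₁) = radialFirstIntegral d (F t₂) (G t₂)) ∧
    (∀ t₀ ∈ I, ∀ t ∈ I,
      (d - 2) * F t ^ 2 =
        2 * G t - 1 + radialFirstIntegral d (F t₀) (G t₀) * (1 - d * G t) ^ (2 / d)) := by
  have hconst : ∀ t₁ ∈ I, ∀ t₂ ∈ I,
      radialFirstIntegral d (F t₁) (G t₁) = radialFirstIntegral d (F t₂) (G t₂) :=
    fun t₁ h₁ t₂ h₂ ↦ div_eq_div_of_hasDerivWithinAt_mul_self hI.convex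
      (fun t ht ↦ hasDerivWithinAt_one_sub_two_mul_add_sq (hG t ht) (hF t ht))
      (fun t ht ↦ hasDerivWithinAt_one_sub_mul_rpow hd (hG t ht) (hGd t ht).ne)
      (fun t ht ↦ (Real.rpow_pos_of_pos (sub_pos.mpr (hGd t ht)) _).ne') h₁ h₂
  refine ⟨hconst, fun t₀ h₀ t ht ↦ ?_⟩
  rw [hconst t₀ h₀ t ht, radialFirstIntegral_mul_rpow (F t) (hGd t ht)]
  ring

/-- Along any C¹ solution of `G' = F − 4FG`, `F' = −F² − G` with `G < 1/4`
on an interval `I`, the quantity `(1 − 2G + 2F²)/(2√(1 − 4G))` is constant; equivalently,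
`F² = (2G − 1)/2 + C₄·√(1 − 4G)` with `C₄` computed from the data at any fixed `t₀ ∈ I`. -/
theorem first_integral_d4
    (I : Set ℝ) (hI : I.OrdConnected)
    (F G : ℝ → ℝ)
    (hG : ∀ t ∈ I, HasDerivAt G (F t - 4 * F t * G t) t)
    (hF : ∀ t ∈ I, HasDerivAt F (-(F t) ^ 2 - G t) t)
    (hG4 : ∀ t ∈ I, G t < 1 / 4) :
    (∀ t₁ ∈ I, ∀ t₂ ∈ I,
      (1 - 2 * G t₁ + 2 * (F t₁) ^ 2) / (2 * Real.sqrt (1 - 4 * G t₁)) =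
      (1 - 2 * G t₂ + 2 * (F t₂) ^ 2) / (2 * Real.sqrt (1 - 4 * G t₂))) ∧
    (∀ t₀ ∈ I, ∀ t ∈ I,
      (F t) ^ 2 = (2 * G t - 1) / 2 +
        ((1 - 2 * G t₀ + 2 * (F t₀) ^ 2) / (2 * Real.sqrt (1 - 4 * G t₀))) *
          Real.sqrt (1 - 4 * G t)) := by
  obtain ⟨hconst, hsq⟩ := first_integral_d4_general four_ne_zero hI
    (fun t ht ↦ (hG t ht).hasDerivWithinAt) (fun t ht ↦ (hF t ht).hasDerivWithinAt)
    (fun t ht ↦ by linarith [hG4 t ht])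
  simp only [rpow_two_div_four] at hsq
  simp only [← radialFirstIntegral_four_div_two]
  exact ⟨fun t₁ h₁ t₂ h₂ ↦ congrArg (· / 2) (hconst t₁ h₁ t₂ h₂),
    fun t₀ h₀ t ht ↦ by linear_combination hsq t₀ h₀ t ht / 2⟩
end

section
/- Let (F,G) : I → ℝ² be a C¹ solution of the system G' = F − 4FG, F' = −F² − G, and let r : I → ℝ be a C¹ solution of the characteristic equation r'(t) = F(t)·r(t). Then the function t ↦ (1 − 4G(t))·r(t)⁴ is constant on I. -/
/-! The factor `u = 1 - d G` turns `G' = F - d F G` into the linear equation `u' = -(d F) u`, while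
`r' = F r` gives `(r ^ d)' = (d F) r ^ d`. The two rates are opposite, so `u r ^ d` has zero
derivative. -/

section LinearODE

variable {𝕜 A : Type*} [NontriviallyNormedField 𝕜] [NormedCommRing A] [NormedAlgebra 𝕜 A]
  {s : Set 𝕜} {x : 𝕜} {a : A} {f g : 𝕜 → A}

theorem hasDerivWithinAt_pow_of_linear (hf : HasDerivWithinAt f (a * f x) s x) (n : ℕ) :
    HasDerivWithinAt (fun y ↦ f y ^ n) (n * a * f x ^ n) s x := by
  refine (hf.fun_pow n).congr_deriv ?_
  cases n with
  | zero => simp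
  | succ n => rw [Nat.add_sub_cancel]; ring

theorem hasDerivWithinAt_one_sub_const_mul_of_affine (c : A)
    (hg : HasDerivWithinAt g (a - c * a * g x) s x) :
    HasDerivWithinAt (fun y ↦ 1 - c * g y) (-(c * a) * (1 - c * g x)) s x :=
  ((hg.const_mul c).const_sub 1).congr_deriv (by ring)

theorem hasDerivWithinAt_mul_zero_of_opposite_rates
    (hf : HasDerivWithinAt f (-a * f x) s x) (hg : HasDerivWithinAt g (a * g x) s x) :
    HasDerivWithinAt (fun y ↦ f y * g y) 0 s x :=
  (hf.fun_mul hg).congr_deriv (by ring)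

end LinearODE

theorem eq_of_hasDerivWithinAt_zero {𝕜 E : Type*} [RCLike 𝕜] [NormedAddCommGroup E]
    [NormedSpace 𝕜 E] {s : Set 𝕜} (hs : Convex ℝ s) {f : 𝕜 → E}
    (hf : ∀ x ∈ s, HasDerivWithinAt f 0 s x) {x y : 𝕜} (hx : x ∈ s) (hy : y ∈ s) :
    f x = f y := by
  have norm_sub_le : ‖f x - f y‖ ≤ 0 * ‖x - y‖ :=
    hs.norm_image_sub_le_of_norm_hasDerivWithin_le hf (fun _ _ ↦ norm_zero.le) hy hx
  rwa [zero_mul, norm_le_zero_iff, sub_eq_zero] at norm_sub_le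

theorem conserved_quantity_along_characteristic_general {𝕜 A : Type*} [RCLike 𝕜]
    [NormedCommRing A] [NormedAlgebra 𝕜 A] {I : Set 𝕜} (hI : Convex ℝ I) (d : ℕ)
    {F G r : 𝕜 → A}
    (hG : ∀ t ∈ I, HasDerivWithinAt G (F t - d * F t * G t) I t)
    (hr : ∀ t ∈ I, HasDerivWithinAt r (F t * r t) I t) :
    ∀ t₁ ∈ I, ∀ t₂ ∈ I, (1 - d * G t₁) * r t₁ ^ d = (1 - d * G t₂) * r t₂ ^ d := by
  have deriv_zero : ∀ t ∈ I, HasDerivWithinAt (fun t ↦ (1 - d * G t) * r t ^ d) 0 I t :=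
    fun t ht ↦ hasDerivWithinAt_mul_zero_of_opposite_rates
      (hasDerivWithinAt_one_sub_const_mul_of_affine (d : A) (hG t ht))
      (hasDerivWithinAt_pow_of_linear (hr t ht) d)
  exact fun _ h₁ _ h₂ ↦ eq_of_hasDerivWithinAt_zero hI deriv_zero h₁ h₂

/-- Along any C¹ solution of `G' = F − 4FG`, `F' = −F² − G` together with a
C¹ solution of the characteristic equation `r' = F·r`, the quantity `(1 − 4G)·r⁴`
is constant on the interval. -/
theorem conserved_quantity_along_characteristic
    (I : Set ℝ) (hI : I.OrdConnected)
    (F G r : ℝ → ℝ)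
    (hG : ∀ t ∈ I, HasDerivAt G (F t - 4 * F t * G t) t)
    (hF : ∀ t ∈ I, HasDerivAt F (-(F t) ^ 2 - G t) t)
    (hr : ∀ t ∈ I, HasDerivAt r (F t * r t) t) :
    ∀ t₁ ∈ I, ∀ t₂ ∈ I,
      (1 - 4 * G t₁) * (r t₁) ^ 4 = (1 - 4 * G t₂) * (r t₂) ^ 4 :=
  conserved_quantity_along_characteristic_general hI.convex 4
    (fun t ht ↦ (hG t ht).hasDerivWithinAt) (fun t ht ↦ (hr t ht).hasDerivWithinAt)
end

section
/- Let (F,G) : I → ℝ² be a C¹ solution of G' = F − 4FG, F' = −F² − G with G(t) < 1/4 on I, let t₀ ∈ I, set M(t) = √(1 − 4G(t)), M₀ = M(t₀), F₀ = F(t₀), and C₄ = (1 + M₀² + 4F₀²)/(4M₀). Then C₄ ≥ (1 + M₀²)/(4M₀) ≥ 1/2, and for all t ∈ I one has 4F(t)² = 4C₄·M(t) − 1 − M(t)², so that M₋ ≤ M(t) ≤ M₊ where M± = 2C₄ ± √(4C₄² − 1). -/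
/-!
Along a solution of `F' = -F² - G`, `G' = F - d F G`, the three quantities `1 - d G`,
`(1 - d G) ^ (2 / d)` and `F² - (2 G - 1) / (d - 2)` all solve scalar linear equations: the first
is multiplied by `-d F` under differentiation, the other two by `-2 F`. Uniqueness for the first
equation propagates the positivity of the density from a single time, and the quotient of the other
two is the first integral `C_d`. For `d = 4` its conservation reads `4 F² = 4 C₄ M - 1 - M²`, so
`(M - 2 C₄)² = 4 C₄² - 1 - 4 F² ≤ 4 C₄² - 1`.
-/

open Set

section LinearODE

variable {s : Set ℝ} {t t₀ : ℝ}

theorem eqOn_zero_of_hasDerivWithinAt_clm_apply {E : Type*} [NormedAddCommGroup E]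
    [NormedSpace ℝ E] {A : ℝ → E →L[ℝ] E} {u : ℝ → E} (hs : s.OrdConnected)
    (hA : ContinuousOn A s) (hu : ∀ t ∈ s, HasDerivWithinAt u (A t (u t)) s t)
    (ht₀ : t₀ ∈ s) (hu₀ : u t₀ = 0) : EqOn u 0 s := by
  intro t ht
  have hsub : uIcc t₀ t ⊆ s := hs.uIcc_subset ht₀ ht
  obtain ⟨K, hK⟩ := isCompact_uIcc.exists_bound_of_continuousOn (hA.mono hsub)
  have hlip : ∀ τ ∈ uIcc t₀ t, LipschitzOnWith K.toNNReal (A τ) univ := fun τ hτ =>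
    ((A τ).lipschitz.weaken (NNReal.le_toNNReal_of_coe_le (hK τ hτ))).lipschitzOnWith
  have hcont : ContinuousOn u (uIcc t₀ t) :=
    fun τ hτ => (hu τ (hsub hτ)).continuousWithinAt.mono hsub
  have hderiv : ∀ τ ∈ uIcc t₀ t, HasDerivWithinAt u (A τ (u τ)) (uIcc t₀ t) τ :=
    fun τ hτ => (hu τ (hsub hτ)).mono hsub
  have hzero : ∀ τ r, HasDerivWithinAt (0 : ℝ → E) (A τ ((0 : ℝ → E) τ)) r τ := fun τ r => by
    simpa using hasDerivWithinAt_zero τ r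
  rcases le_total t₀ t with h | h
  · rw [uIcc_of_le h] at hlip hcont hderiv
    exact ODE_solution_unique_of_mem_Icc_right
      (fun τ hτ => hlip τ (Ico_subset_Icc_self hτ)) hcont
      (fun τ hτ => (hderiv τ (Ico_subset_Icc_self hτ)).mono_of_mem_nhdsWithin
        (Icc_mem_nhdsGE_of_mem hτ))
      (fun _ _ => mem_univ _) continuousOn_const (fun τ _ => hzero τ _) (fun _ _ => mem_univ _)
      hu₀ (right_mem_Icc.2 h)
  · rw [uIcc_of_ge h] at hlip hcont hderiv
    exact ODE_solution_unique_of_mem_Icc_left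
      (fun τ hτ => hlip τ (Ioc_subset_Icc_self hτ)) hcont
      (fun τ hτ => (hderiv τ (Ioc_subset_Icc_self hτ)).mono_of_mem_nhdsWithin
        (Icc_mem_nhdsLE_of_mem hτ))
      (fun _ _ => mem_univ _) continuousOn_const (fun τ _ => hzero τ _) (fun _ _ => mem_univ _)
      hu₀ (left_mem_Icc.2 h)

theorem pos_of_hasDerivWithinAt_mul {a u : ℝ → ℝ} (hs : s.OrdConnected)
    (ha : ContinuousOn a s) (hu : ∀ t ∈ s, HasDerivWithinAt u (a t * u t) s t)
    (ht₀ : t₀ ∈ s) (hu₀ : 0 < u t₀) (ht : t ∈ s) : 0 < u t := by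
  by_contra! hut
  have hcont : ContinuousOn u s := fun τ hτ => (hu τ hτ).continuousWithinAt
  obtain ⟨τ, hτ, huτ⟩ : (0 : ℝ) ∈ u '' s :=
    hs.isPreconnected.intermediate_value ht ht₀ hcont ⟨hut, hu₀.le⟩
  have hzero : EqOn u 0 s := eqOn_zero_of_hasDerivWithinAt_clm_apply hs
    (A := fun t => a t • ContinuousLinearMap.id ℝ ℝ) (ha.smul continuousOn_const)
    (fun t ht => by simpa using hu t ht) hτ huτ
  exact hu₀.ne' (hzero ht₀)

theorem div_eq_div_of_hasDerivWithinAt_mul {𝕜 : Type*} [NontriviallyNormedField 𝕜]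
    [NormedAlgebra ℝ 𝕜] {a u v : ℝ → 𝕜} (hs : s.OrdConnected)
    (hu : ∀ t ∈ s, HasDerivWithinAt u (a t * u t) s t)
    (hv : ∀ t ∈ s, HasDerivWithinAt v (a t * v t) s t) (hv₀ : ∀ t ∈ s, v t ≠ 0)
    (ht₀ : t₀ ∈ s) (ht : t ∈ s) : u t / v t = u t₀ / v t₀ := by
  have hderiv : ∀ τ ∈ s, HasDerivWithinAt (fun τ => u τ / v τ) 0 s τ := fun τ hτ =>
    ((hu τ hτ).fun_div (hv τ hτ) (hv₀ τ hτ)).congr_deriv (by ring)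
  have hle := hs.convex.norm_image_sub_le_of_norm_hasDerivWithin_le (C := 0) hderiv
    (by simp) ht₀ ht
  rwa [zero_mul, norm_le_zero_iff, sub_eq_zero] at hle

end LinearODE

/-- The system (GF) in dimension `d`, which governs radial solutions of the repulsive pressureless
Euler–Poisson equations along characteristics. Derivatives are taken within `s`, so that they are
one-sided at the endpoints of a closed interval, and `d` is any real number. -/
structure IsGFSolutionOn (d : ℝ) (F G : ℝ → ℝ) (s : Set ℝ) : Prop where
  hasDerivWithinAt_F : ∀ t ∈ s, HasDerivWithinAt F (-(F t) ^ 2 - G t) s t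
  hasDerivWithinAt_G : ∀ t ∈ s, HasDerivWithinAt G (F t - d * F t * G t) s t

/-- The first integral `C_d` of the system (GF) as a function of the state `(f, g)`, obtained by
solving `F² = (2G - 1) / (d - 2) + C_d (1 - dG) ^ (2 / d)` for `C_d`. It is meaningful for
`d ≠ 0`, `d ≠ 2` and `1 - d g > 0`. -/
noncomputable def gfFirstIntegral (d f g : ℝ) : ℝ :=
  (f ^ 2 - (2 * g - 1) / (d - 2)) / (1 - d * g) ^ (2 / d)

theorem gfFirstIntegral_four {f g : ℝ} (hg : g ≤ 1 / 4) :
    gfFirstIntegral 4 f g = (1 + √(1 - 4 * g) ^ 2 + 4 * f ^ 2) / (4 * √(1 - 4 * g)) := by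
  have hexp : (1 - 4 * g) ^ ((2 : ℝ) / 4) = √(1 - 4 * g) := by
    rw [Real.sqrt_eq_rpow]
    norm_num
  rw [gfFirstIntegral, hexp, Real.sq_sqrt (by linarith), ← div_div]
  ring

namespace IsGFSolutionOn

variable {d : ℝ} {F G : ℝ → ℝ} {s : Set ℝ} {t t₀ : ℝ}

theorem hasDerivWithinAt_one_sub_mul (h : IsGFSolutionOn d F G s) (ht : t ∈ s) :
    HasDerivWithinAt (fun τ => 1 - d * G τ) (-d * F t * (1 - d * G t)) s t :=
  (((h.hasDerivWithinAt_G t ht).const_mul d).const_sub 1).congr_deriv (by ring)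

theorem one_sub_mul_pos (h : IsGFSolutionOn d F G s) (hs : s.OrdConnected) (ht₀ : t₀ ∈ s)
    (hG₀ : 0 < 1 - d * G t₀) (ht : t ∈ s) : 0 < 1 - d * G t :=
  have hF : ContinuousOn F s := fun τ hτ => (h.hasDerivWithinAt_F τ hτ).continuousWithinAt
  pos_of_hasDerivWithinAt_mul (u := fun τ => 1 - d * G τ) hs (hF.const_mul (-d))
    (fun _ hτ => h.hasDerivWithinAt_one_sub_mul hτ) ht₀ hG₀ ht

theorem hasDerivWithinAt_one_sub_mul_rpow (h : IsGFSolutionOn d F G s) (hd : d ≠ 0)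
    (ht : t ∈ s) (hG : 0 < 1 - d * G t) :
    HasDerivWithinAt (fun τ => (1 - d * G τ) ^ (2 / d))
      (-2 * F t * (1 - d * G t) ^ (2 / d)) s t := by
  refine ((h.hasDerivWithinAt_one_sub_mul ht).rpow_const (Or.inl hG.ne')).congr_deriv ?_
  rw [Real.rpow_sub_one hG.ne']
  field_simp

theorem hasDerivWithinAt_sq_sub (h : IsGFSolutionOn d F G s) (hd : d ≠ 2) (ht : t ∈ s) :
    HasDerivWithinAt (fun τ => F τ ^ 2 - (2 * G τ - 1) / (d - 2))
      (-2 * F t * (F t ^ 2 - (2 * G t - 1) / (d - 2))) s t := by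
  have hd' : d - 2 ≠ 0 := sub_ne_zero.2 hd
  refine (((h.hasDerivWithinAt_F t ht).fun_pow 2).fun_sub
    ((((h.hasDerivWithinAt_G t ht).const_mul 2).sub_const 1).div_const (d - 2))).congr_deriv ?_
  field_simp
  ring

theorem gfFirstIntegral_eq (h : IsGFSolutionOn d F G s) (hs : s.OrdConnected) (hd₀ : d ≠ 0)
    (hd₂ : d ≠ 2) (ht₀ : t₀ ∈ s) (hG₀ : 0 < 1 - d * G t₀) (ht : t ∈ s) :
    gfFirstIntegral d (F t) (G t) = gfFirstIntegral d (F t₀) (G t₀) :=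
  have hpos : ∀ τ ∈ s, 0 < 1 - d * G τ := fun _ hτ => h.one_sub_mul_pos hs ht₀ hG₀ hτ
  div_eq_div_of_hasDerivWithinAt_mul hs (fun _ hτ => h.hasDerivWithinAt_sq_sub hd₂ hτ)
    (fun τ hτ => h.hasDerivWithinAt_one_sub_mul_rpow hd₀ hτ (hpos τ hτ))
    (fun τ hτ => (Real.rpow_pos_of_pos (hpos τ hτ) _).ne') ht₀ ht

end IsGFSolutionOn

theorem half_le_one_add_sq_div {m : ℝ} (hm : 0 < m) : 1 / 2 ≤ (1 + m ^ 2) / (4 * m) := by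
  rw [le_div_iff₀ (by positivity)]
  linarith [two_mul_le_add_sq 1 m]

theorem bounds_on_M_d4_general {I : Set ℝ} (hI : I.OrdConnected) {F G : ℝ → ℝ}
    (hFG : IsGFSolutionOn 4 F G I) {t₀ : ℝ} (ht₀ : t₀ ∈ I) (hG₀ : G t₀ < 1 / 4)
    {M : ℝ → ℝ} (hM : ∀ t ∈ I, M t = √(1 - 4 * G t))
    {C₄ : ℝ} (hC₄ : C₄ = (1 + M t₀ ^ 2 + 4 * F t₀ ^ 2) / (4 * M t₀)) :
    C₄ ≥ (1 + M t₀ ^ 2) / (4 * M t₀) ∧ (1 + M t₀ ^ 2) / (4 * M t₀) ≥ 1 / 2 ∧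
    ∀ t ∈ I, 4 * F t ^ 2 = 4 * C₄ * M t - 1 - M t ^ 2 ∧
      2 * C₄ - √(4 * C₄ ^ 2 - 1) ≤ M t ∧ M t ≤ 2 * C₄ + √(4 * C₄ ^ 2 - 1) := by
  have hG₀' : 0 < 1 - 4 * G t₀ := by linarith
  have hG : ∀ t ∈ I, 0 < 1 - 4 * G t := fun t ht => hFG.one_sub_mul_pos hI ht₀ hG₀' ht
  have hMpos : ∀ t ∈ I, 0 < M t := fun t ht => hM t ht ▸ Real.sqrt_pos.2 (hG t ht)
  have hM₀ : 0 < M t₀ := hMpos t₀ ht₀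
  have hint : ∀ t ∈ I, gfFirstIntegral 4 (F t) (G t) = (1 + M t ^ 2 + 4 * F t ^ 2) / (4 * M t) :=
    fun t ht => by rw [gfFirstIntegral_four (by linarith [hG t ht]), hM t ht]
  refine ⟨?_, half_le_one_add_sq_div hM₀, fun t ht => ?_⟩
  · rw [hC₄, ge_iff_le]
    gcongr ?_ / _
    exact le_add_of_nonneg_right (by positivity)
  · have hconst : C₄ = (1 + M t ^ 2 + 4 * F t ^ 2) / (4 * M t) := by
      rw [hC₄, ← hint t ht, ← hint t₀ ht₀]
      exact (hFG.gfFirstIntegral_eq hI four_ne_zero (by norm_num) ht₀ hG₀' ht).symm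
    have hF : 4 * F t ^ 2 = 4 * C₄ * M t - 1 - M t ^ 2 := by
      rw [eq_div_iff (by linarith [hMpos t ht])] at hconst
      linarith
    have habs : |M t - 2 * C₄| ≤ √(4 * C₄ ^ 2 - 1) :=
      Real.abs_le_sqrt (by linarith [sq_nonneg (F t)])
    obtain ⟨hlower, hupper⟩ := abs_le.1 habs
    exact ⟨hF, by linarith, by linarith⟩

/-- For a C¹ solution of `G' = F − 4FG`, `F' = −F² − G` with `G < 1/4`, setting
`M = √(1 − 4G)`, `M₀ = M(t₀)`, `F₀ = F(t₀)` and `C₄ = (1 + M₀² + 4F₀²)/(4M₀)`, one has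
`C₄ ≥ (1 + M₀²)/(4M₀) ≥ 1/2`, and along the solution `4F² = 4C₄M − 1 − M²`, hence
`M₋ ≤ M ≤ M₊` where `M± = 2C₄ ± √(4C₄² − 1)`. -/
theorem bounds_on_M_d4
    (I : Set ℝ) (hI : I.OrdConnected)
    (F G : ℝ → ℝ)
    (hG : ∀ t ∈ I, HasDerivAt G (F t - 4 * F t * G t) t)
    (hF : ∀ t ∈ I, HasDerivAt F (-(F t) ^ 2 - G t) t)
    (hG4 : ∀ t ∈ I, G t < 1 / 4)
    (t₀ : ℝ) (ht₀ : t₀ ∈ I)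
    (M : ℝ → ℝ) (hM : ∀ t, M t = Real.sqrt (1 - 4 * G t))
    (M₀ F₀ C₄ : ℝ)
    (hM₀ : M₀ = M t₀) (hF₀ : F₀ = F t₀)
    (hC₄ : C₄ = (1 + M₀ ^ 2 + 4 * F₀ ^ 2) / (4 * M₀)) :
    C₄ ≥ (1 + M₀ ^ 2) / (4 * M₀) ∧ (1 + M₀ ^ 2) / (4 * M₀) ≥ 1 / 2 ∧
    ∀ t ∈ I, 4 * (F t) ^ 2 = 4 * C₄ * M t - 1 - (M t) ^ 2 ∧
      2 * C₄ - Real.sqrt (4 * C₄ ^ 2 - 1) ≤ M t ∧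
      M t ≤ 2 * C₄ + Real.sqrt (4 * C₄ ^ 2 - 1) := by
  subst hM₀ hF₀
  exact bounds_on_M_d4_general hI ⟨fun t ht => (hF t ht).hasDerivWithinAt,
    fun t ht => (hG t ht).hasDerivWithinAt⟩ ht₀ (hG4 t₀ ht₀) (fun t _ => hM t) hC₄
end

section
/- Let (F₀,G₀) ∈ ℝ² with G₀ < 1/4. Then the maximal solution (F,G) of the system G' = F − 4FG, F' = −F² − G with F(0) = F₀, G(0) = G₀ is defined on all of ℝ, satisfies G(t) < 1/4 for all t, is periodic with period 2π (i.e., F(t + 2π) = F(t) and G(t + 2π) = G(t) for all t), and satisfies ∫₀^{2π} F(τ) dτ = 0. -/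
/-!
Along a characteristic the radius `r` obeys `r' = F r`, so `F` is half the logarithmic derivative
of the squared radius `q = r ^ 2`, and `(1 - 4 G) r ^ 4` is a constant `K`, positive exactly when
`G < 1 / 4`. The resulting radial equation `r'' = - r / 4 + K / (4 r ^ 3)` conserves the energy
`r' ^ 2 + r ^ 2 / 4 + K / (4 r ^ 2)`. Writing this energy as `c / 2`, one finds the *linear*
equation `q'' + q = c`, whose solutions all have period `2π`. In the phase plane `(q, q')` moves
on the circle with centre `(c, 0)` and squared radius `c ^ 2 - K`; as `K > 0`, this circle lies in
the half-plane `q > 0`, so `F` and `G` never blow up.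
-/

section Oscillator

/-- The solution `q` of the oscillator equation `q'' + q = c` about the equilibrium `c`, with
initial displacement `q 0 - c = a` and initial velocity `q' 0 = b`. -/
noncomputable def oscillator (c a b t : ℝ) : ℝ :=
  c + a * Real.cos t + b * Real.sin t

variable (c a b t : ℝ)

theorem hasDerivAt_oscillator : HasDerivAt (oscillator c a b) (oscillator 0 b (-a) t) t := by
  refine ((((Real.hasDerivAt_cos t).const_mul a).const_add c).add
    ((Real.hasDerivAt_sin t).const_mul b)).congr_deriv ?_
  simp only [oscillator]
  ring

theorem deriv_oscillator : deriv (oscillator c a b) = oscillator 0 b (-a) :=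
  funext fun t => (hasDerivAt_oscillator c a b t).deriv

theorem hasDerivAt_deriv_oscillator :
    HasDerivAt (deriv (oscillator c a b)) (c - oscillator c a b t) t := by
  rw [deriv_oscillator]
  refine (hasDerivAt_oscillator 0 b (-a) t).congr_deriv ?_
  simp only [oscillator]
  ring

theorem contDiff_oscillator {n : WithTop ℕ∞} : ContDiff ℝ n (oscillator c a b) := by
  unfold oscillator
  fun_prop

theorem oscillator_zero : oscillator c a b 0 = c + a := by
  simp [oscillator]

theorem periodic_oscillator :
    Function.Periodic (oscillator c a b) (2 * Real.pi) := fun t => by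
  simp only [oscillator, Real.cos_add_two_pi, Real.sin_add_two_pi]

theorem sq_deriv_add_sq_oscillator_sub :
    deriv (oscillator c a b) t ^ 2 + (oscillator c a b t - c) ^ 2 = a ^ 2 + b ^ 2 := by
  rw [deriv_oscillator]
  simp only [oscillator]
  linear_combination (a ^ 2 + b ^ 2) * Real.sin_sq_add_cos_sq t

variable {c a b}

theorem oscillator_pos (hc : 0 ≤ c) (hab : a ^ 2 + b ^ 2 < c ^ 2) : 0 < oscillator c a b t := by
  have displacement_sq_lt : (oscillator c a b t - c) ^ 2 < c ^ 2 := by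
    linarith [sq_deriv_add_sq_oscillator_sub c a b t, sq_nonneg (deriv (oscillator c a b) t)]
  linarith [(abs_lt.1 (abs_lt_of_sq_lt_sq displacement_sq_lt hc)).1]

end Oscillator

theorem periodic_logDeriv {𝕜 𝕜' : Type*} [NontriviallyNormedField 𝕜] [NontriviallyNormedField 𝕜']
    [NormedAlgebra 𝕜 𝕜'] {f : 𝕜 → 𝕜'} {T : 𝕜} (hf : Function.Periodic f T) :
    Function.Periodic (logDeriv f) T := fun t => by
  have hderiv : deriv f (t + T) = deriv f t := by
    rw [← deriv_comp_add_const, funext hf]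
  rw [logDeriv_apply, logDeriv_apply, hderiv, hf t]

theorem integral_logDeriv_eq_zero_of_periodic {f : ℝ → ℝ} {T : ℝ}
    (hf : Function.Periodic f T) (hf_smooth : ContDiff ℝ 1 f) (hf_ne : ∀ t, f t ≠ 0) (a : ℝ) :
    ∫ t in a..(a + T), logDeriv f t = 0 := by
  have hlog (t : ℝ) : HasDerivAt (fun s => Real.log (f s)) (logDeriv f t) t :=
    ((hf_smooth.differentiable one_ne_zero t).hasDerivAt).log (hf_ne t)
  have hcont : Continuous (logDeriv f) :=
    hf_smooth.continuous_deriv_one.div hf_smooth.continuous hf_ne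
  rw [intervalIntegral.integral_eq_sub_of_hasDerivAt (fun t _ => hlog t)
    (hcont.intervalIntegrable _ _), hf a, sub_self]

section Profiles

/-- The velocity profile `F = V / r` along a characteristic with squared radius `q = r ^ 2`; since
`r' = V`, it is the logarithmic derivative of `r`. -/
noncomputable def velocityProfile (q : ℝ → ℝ) (t : ℝ) : ℝ :=
  logDeriv q t / 2

/-- The field profile `G = E / r` along a characteristic with squared radius `q = r ^ 2`, given by
the conserved quantity `K = (1 - 4 * G) * r ^ 4`. -/
noncomputable def fieldProfile (K : ℝ) (q : ℝ → ℝ) (t : ℝ) : ℝ :=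
  (1 - K / q t ^ 2) / 4

variable {q : ℝ → ℝ} {c K t T : ℝ}

theorem hasDerivAt_fieldProfile (hq : DifferentiableAt ℝ q t) (hq_ne : q t ≠ 0) :
    HasDerivAt (fieldProfile K q)
      (velocityProfile q t - 4 * velocityProfile q t * fieldProfile K q t) t := by
  refine ((((hasDerivAt_const t K).fun_div (hq.hasDerivAt.fun_pow 2)
    (pow_ne_zero 2 hq_ne)).const_sub 1).div_const 4).congr_deriv ?_
  simp only [velocityProfile, fieldProfile, logDeriv_apply]
  field_simp
  ring

theorem hasDerivAt_velocityProfile (hq : DifferentiableAt ℝ q t)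
    (hq_osc : HasDerivAt (deriv q) (c - q t) t) (hq_ne : q t ≠ 0)
    (hq_energy : deriv q t ^ 2 + (q t - c) ^ 2 = c ^ 2 - K) :
    HasDerivAt (velocityProfile q) (-(velocityProfile q t) ^ 2 - fieldProfile K q t) t := by
  refine ((hq_osc.div hq.hasDerivAt hq_ne).div_const 2).congr_deriv ?_
  obtain rfl : K = c ^ 2 - (deriv q t ^ 2 + (q t - c) ^ 2) := by linarith
  simp only [velocityProfile, fieldProfile, logDeriv_apply]
  field_simp
  ring

theorem fieldProfile_lt_one_fourth (hK : 0 < K) (hq_ne : q t ≠ 0) :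
    fieldProfile K q t < 1 / 4 := by
  have hpos : 0 < K / q t ^ 2 := by positivity
  rw [fieldProfile]
  linarith

theorem periodic_velocityProfile (hq : Function.Periodic q T) :
    Function.Periodic (velocityProfile q) T := fun t => by
  rw [velocityProfile, velocityProfile, periodic_logDeriv hq t]

theorem periodic_fieldProfile (hq : Function.Periodic q T) :
    Function.Periodic (fieldProfile K q) T := fun t => by
  rw [fieldProfile, fieldProfile, hq t]

theorem integral_velocityProfile_eq_zero (hq : Function.Periodic q T) (hq_smooth : ContDiff ℝ 1 q)
    (hq_ne : ∀ t, q t ≠ 0) (a : ℝ) : ∫ t in a..(a + T), velocityProfile q t = 0 := by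
  simp only [velocityProfile, intervalIntegral.integral_div,
    integral_logDeriv_eq_zero_of_periodic hq hq_smooth hq_ne, zero_div]

end Profiles

/-- For any data `(F₀, G₀)` with `G₀ < 1/4`, the maximal solution of
`G' = F − 4FG`, `F' = −F² − G` is global in time, keeps `G < 1/4`, is `2π`-periodic,
and the mean of `F` over a period vanishes. -/
theorem global_periodic_solution_d4
    (F₀ G₀ : ℝ) (hG₀ : G₀ < 1 / 4) :
    ∃ F G : ℝ → ℝ,
      (∀ t, HasDerivAt G (F t - 4 * F t * G t) t) ∧
      (∀ t, HasDerivAt F (-(F t) ^ 2 - G t) t) ∧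
      F 0 = F₀ ∧ G 0 = G₀ ∧
      (∀ t, G t < 1 / 4) ∧
      (∀ t, F (t + 2 * Real.pi) = F t) ∧
      (∀ t, G (t + 2 * Real.pi) = G t) ∧
      (∫ τ in (0:ℝ)..(2 * Real.pi), F τ) = 0 := by
  -- Rescaling `r` does not change `F` and `G`, so we may take `r 0 = 1`; the energy `c / 2` is then
  -- evaluated at time `0`.
  let c : ℝ := 2 * F₀ ^ 2 + 1 - 2 * G₀
  let q : ℝ → ℝ := oscillator c (1 - c) (2 * F₀)
  have hamplitude : (1 - c) ^ 2 + (2 * F₀) ^ 2 = c ^ 2 - (1 - 4 * G₀) := by ring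
  have hc : 0 ≤ c := by linarith [sq_nonneg F₀]
  have hq_ne (t : ℝ) : q t ≠ 0 := (oscillator_pos t hc (by linarith)).ne'
  have hq_smooth : ContDiff ℝ 1 q := contDiff_oscillator c (1 - c) (2 * F₀)
  have hq_diff : Differentiable ℝ q := hq_smooth.differentiable one_ne_zero
  have hq_periodic : Function.Periodic q (2 * Real.pi) := periodic_oscillator c (1 - c) (2 * F₀)
  have hq_zero : q 0 = 1 := by simp [q, oscillator_zero]
  have hq_deriv_zero : deriv q 0 = 2 * F₀ := by simp [q, deriv_oscillator, oscillator_zero]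
  exact ⟨velocityProfile q, fieldProfile (1 - 4 * G₀) q,
    fun t => hasDerivAt_fieldProfile (hq_diff t) (hq_ne t),
    fun t => hasDerivAt_velocityProfile (hq_diff t) (hasDerivAt_deriv_oscillator c _ _ t) (hq_ne t)
      ((sq_deriv_add_sq_oscillator_sub c _ _ t).trans hamplitude),
    by simp [velocityProfile, logDeriv_apply, hq_zero, hq_deriv_zero],
    by simp [fieldProfile, hq_zero],
    fun t => fieldProfile_lt_one_fourth (by linarith) (hq_ne t),
    periodic_velocityProfile hq_periodic,
    periodic_fieldProfile hq_periodic,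
    by simpa using integral_velocityProfile_eq_zero hq_periodic hq_smooth hq_ne 0⟩
end

section
/- Let n, m be positive natural numbers and let W₀ be an m×n real matrix. On an interval J ⊆ ℝ with 0 ∈ J, let Q : J → Matrix(n,n,ℝ) and P : J → Matrix(m,n,ℝ) be C¹ and satisfy Q' = M₁₁·Q + M₁₂·P and P' = M₂₁·Q + M₂₂·P, with Q(0) = Iₙ and P(0) = W₀. Here M₁₁(t) is n×n, M₁₂(t) is n×m, M₂₁(t) is m×n and M₂₂(t) is m×m, all continuous in t. If Q(t) is invertible for every t ∈ J, then W(t) := P(t)·Q(t)⁻¹ is C¹ on J, W(0) = W₀, and W satisfies the matrix Riccati equation W' = M₂₁ + M₂₂·W − W·M₁₁ − W·M₁₂·W on J. -/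
/-!
Differentiating the resolvent identity `A(s)⁻¹ - A(t)⁻¹ = A(s)⁻¹ (A(t) - A(s)) A(t)⁻¹` gives
`(A⁻¹)' = -A⁻¹ A' A⁻¹`, hence the quotient rule `(P Q⁻¹)' = (P' - P Q⁻¹ Q') Q⁻¹`. When `(Q; P)`
solves a linear system, the right-hand side depends on `P` and `Q` only through `W = P Q⁻¹`, in
which it is quadratic.
-/

open Filter Topology

section Entrywise

variable {ι κ : Type*}

theorem continuousOn_matrix_iff {X E : Type*} [TopologicalSpace X] [TopologicalSpace E]
    {A : X → Matrix ι κ E} {s : Set X} :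
    ContinuousOn A s ↔ ∀ i j, ContinuousOn (fun x => A x i j) s :=
  continuousOn_pi.trans <| forall_congr' fun _ => continuousOn_pi

theorem hasDerivAt_matrix_iff {𝕜 E : Type*} [NontriviallyNormedField 𝕜] [NormedAddCommGroup E]
    [NormedSpace 𝕜 E] [Finite ι] [Finite κ] {A : 𝕜 → Matrix ι κ E} {A' : Matrix ι κ E} {t : 𝕜} :
    HasDerivAt A A' t ↔ ∀ i j, HasDerivAt (fun s => A s i j) (A' i j) t := by
  cases nonempty_fintype ι
  cases nonempty_fintype κ
  exact hasDerivAt_pi.trans <| forall_congr' fun _ => hasDerivAt_pi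

end Entrywise

theorem hasDerivAt_matrix_mul {𝕜 R ι κ μ : Type*} [NontriviallyNormedField 𝕜] [NormedRing R]
    [NormedAlgebra 𝕜 R] [Finite ι] [Fintype κ] [Finite μ]
    {A : 𝕜 → Matrix ι κ R} {B : 𝕜 → Matrix κ μ R} {A' : Matrix ι κ R} {B' : Matrix κ μ R} {t : 𝕜}
    (hA : HasDerivAt A A' t) (hB : HasDerivAt B B' t) :
    HasDerivAt (fun s => A s * B s) (A' * B t + A t * B') t := by
  rw [hasDerivAt_matrix_iff] at hA hB ⊢
  intro i j
  simp only [Matrix.add_apply, Matrix.mul_apply, ← Finset.sum_add_distrib]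
  exact HasDerivAt.fun_sum fun k _ => (hA i k).mul (hB k j)

section Inverse

variable {R ι : Type*} [NormedCommRing R] [HasSummableGeomSeries R] [Fintype ι] [DecidableEq ι]

theorem eventually_isUnit_matrix {A : Matrix ι ι R} (hA : IsUnit A) : ∀ᶠ B in 𝓝 A, IsUnit B := by
  simp only [Matrix.isUnit_iff_isUnit_det] at hA ⊢
  exact continuous_id.matrix_det.continuousAt.eventually (Units.isOpen.mem_nhds hA)

theorem continuousAt_matrix_inv_of_isUnit {A : Matrix ι ι R} (hA : IsUnit A) :
    ContinuousAt Inv.inv A := by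
  obtain ⟨d, hd⟩ := (Matrix.isUnit_iff_isUnit_det A).1 hA
  exact continuousAt_matrix_inv A (hd ▸ NormedRing.inverse_continuousAt d)

variable {𝕜 κ : Type*} [NontriviallyNormedField 𝕜] [NormedAlgebra 𝕜 R]

open scoped Matrix.Norms.Elementwise in
theorem hasDerivAt_matrix_inv {A : 𝕜 → Matrix ι ι R} {A' : Matrix ι ι R} {t : 𝕜}
    (hA : HasDerivAt A A' t) (hAt : IsUnit (A t)) :
    HasDerivAt (fun s => (A s)⁻¹) (-((A t)⁻¹ * A' * (A t)⁻¹)) t := by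
  have hA_tendsto : Tendsto A (𝓝[≠] t) (𝓝 (A t)) := hA.continuousAt.mono_left nhdsWithin_le_nhds
  have hinv_tendsto : Tendsto (fun s => (A s)⁻¹) (𝓝[≠] t) (𝓝 (A t)⁻¹) :=
    (continuousAt_matrix_inv_of_isUnit hAt).tendsto.comp hA_tendsto
  have hslope : ∀ᶠ s in 𝓝[≠] t,
      -((A s)⁻¹ * slope A t s * (A t)⁻¹) = slope (fun s => (A s)⁻¹) t s := by
    filter_upwards [hA_tendsto.eventually (eventually_isUnit_matrix hAt)] with s hAs
    rw [slope_def_module, slope_def_module, Matrix.inv_sub_inv (iff_of_true hAs hAt),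
      ← neg_sub (A s) (A t), Matrix.mul_neg, Matrix.neg_mul, smul_neg, Matrix.mul_smul,
      Matrix.smul_mul]
  have hslope_tendsto : Tendsto (slope A t) (𝓝[≠] t) (𝓝 A') := hasDerivAt_iff_tendsto_slope.1 hA
  exact hasDerivAt_iff_tendsto_slope.2 <|
    ((hinv_tendsto.mul hslope_tendsto).mul_const _).neg.congr' hslope

theorem hasDerivAt_matrix_mul_inv [Finite κ] {P : 𝕜 → Matrix κ ι R} {Q : 𝕜 → Matrix ι ι R}
    {P' : Matrix κ ι R} {Q' : Matrix ι ι R} {t : 𝕜}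
    (hP : HasDerivAt P P' t) (hQ : HasDerivAt Q Q' t) (hQt : IsUnit (Q t)) :
    HasDerivAt (fun s => P s * (Q s)⁻¹) ((P' - P t * (Q t)⁻¹ * Q') * (Q t)⁻¹) t := by
  convert hasDerivAt_matrix_mul hP (hasDerivAt_matrix_inv hQ hQt) using 1
  rw [Matrix.sub_mul, sub_eq_add_neg, Matrix.mul_neg]
  simp only [Matrix.mul_assoc]

variable [Fintype κ]

theorem hasDerivAt_riccati {P : 𝕜 → Matrix κ ι R} {Q : 𝕜 → Matrix ι ι R} {t : 𝕜}
    {M₁₁ : Matrix ι ι R} {M₁₂ : Matrix ι κ R} {M₂₁ : Matrix κ ι R} {M₂₂ : Matrix κ κ R}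
    (hQ : HasDerivAt Q (M₁₁ * Q t + M₁₂ * P t) t) (hP : HasDerivAt P (M₂₁ * Q t + M₂₂ * P t) t)
    (hQt : IsUnit (Q t)) :
    HasDerivAt (fun s => P s * (Q s)⁻¹)
      (M₂₁ + M₂₂ * (P t * (Q t)⁻¹) - P t * (Q t)⁻¹ * M₁₁
        - P t * (Q t)⁻¹ * M₁₂ * (P t * (Q t)⁻¹)) t := by
  have hcancel : Q t * (Q t)⁻¹ = 1 :=
    Matrix.mul_nonsing_inv _ ((Matrix.isUnit_iff_isUnit_det _).1 hQt)
  convert hasDerivAt_matrix_mul_inv hP hQ hQt using 1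
  simp only [Matrix.sub_mul, Matrix.add_mul, Matrix.mul_add, Matrix.mul_assoc, hcancel,
    Matrix.mul_one, sub_sub]

theorem radon_lemma_general {J : Set 𝕜} {t₀ : 𝕜}
    {M₁₁ : 𝕜 → Matrix ι ι R} {M₁₂ : 𝕜 → Matrix ι κ R}
    {M₂₁ : 𝕜 → Matrix κ ι R} {M₂₂ : 𝕜 → Matrix κ κ R}
    {W₀ : Matrix κ ι R} {Q : 𝕜 → Matrix ι ι R} {P : 𝕜 → Matrix κ ι R}
    (hQ : ∀ t ∈ J, HasDerivAt Q (M₁₁ t * Q t + M₁₂ t * P t) t)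
    (hP : ∀ t ∈ J, HasDerivAt P (M₂₁ t * Q t + M₂₂ t * P t) t)
    (hQ₀ : Q t₀ = 1) (hP₀ : P t₀ = W₀) (hinv : ∀ t ∈ J, IsUnit (Q t)) :
    P t₀ * (Q t₀)⁻¹ = W₀ ∧
    ContinuousOn (fun t => P t * (Q t)⁻¹) J ∧
    ∀ t ∈ J, HasDerivAt (fun s => P s * (Q s)⁻¹)
      (M₂₁ t + M₂₂ t * (P t * (Q t)⁻¹) - P t * (Q t)⁻¹ * M₁₁ t
        - P t * (Q t)⁻¹ * M₁₂ t * (P t * (Q t)⁻¹)) t := by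
  have hriccati := fun t ht => hasDerivAt_riccati (hQ t ht) (hP t ht) (hinv t ht)
  refine ⟨by rw [hQ₀, hP₀, inv_one, Matrix.mul_one], ?_, hriccati⟩
  refine continuousOn_matrix_iff.2 fun i j t ht => ?_
  exact (hasDerivAt_matrix_iff.1 (hriccati t ht) i j).continuousAt.continuousWithinAt

end Inverse

/-- Radon lemma: if the block-linear system `Q' = M₁₁Q + M₁₂P`,
`P' = M₂₁Q + M₂₂P` with `Q(0) = Iₙ`, `P(0) = W₀` has `Q(t)` invertible on `J`,
then `W := P·Q⁻¹` is C¹, satisfies `W(0) = W₀` and the matrix Riccati equation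
`W' = M₂₁ + M₂₂W − WM₁₁ − WM₁₂W` on `J`. -/
theorem radon_lemma
    (n m : ℕ) (hn : 0 < n) (hm : 0 < m)
    (J : Set ℝ) (hJ : J.OrdConnected) (h0 : (0:ℝ) ∈ J)
    (M₁₁ : ℝ → Matrix (Fin n) (Fin n) ℝ) (M₁₂ : ℝ → Matrix (Fin n) (Fin m) ℝ)
    (M₂₁ : ℝ → Matrix (Fin m) (Fin n) ℝ) (M₂₂ : ℝ → Matrix (Fin m) (Fin m) ℝ)
    (hM₁₁ : ∀ i j, ContinuousOn (fun t => M₁₁ t i j) J)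
    (hM₁₂ : ∀ i j, ContinuousOn (fun t => M₁₂ t i j) J)
    (hM₂₁ : ∀ i j, ContinuousOn (fun t => M₂₁ t i j) J)
    (hM₂₂ : ∀ i j, ContinuousOn (fun t => M₂₂ t i j) J)
    (W₀ : Matrix (Fin m) (Fin n) ℝ)
    (Q : ℝ → Matrix (Fin n) (Fin n) ℝ) (P : ℝ → Matrix (Fin m) (Fin n) ℝ)
    (hQ : ∀ t ∈ J, ∀ i j,
      HasDerivAt (fun s => Q s i j) ((M₁₁ t * Q t + M₁₂ t * P t) i j) t)
    (hP : ∀ t ∈ J, ∀ i j,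
      HasDerivAt (fun s => P s i j) ((M₂₁ t * Q t + M₂₂ t * P t) i j) t)
    (hQ0 : Q 0 = 1) (hP0 : P 0 = W₀)
    (hinv : ∀ t ∈ J, IsUnit (Q t)) :
    P 0 * (Q 0)⁻¹ = W₀ ∧
    (∀ i j, ContinuousOn (fun t => (P t * (Q t)⁻¹) i j) J) ∧
    (∀ t ∈ J, ∀ i j,
      HasDerivAt (fun s => (P s * (Q s)⁻¹) i j)
        ((M₂₁ t + M₂₂ t * (P t * (Q t)⁻¹) - (P t * (Q t)⁻¹) * M₁₁ t
          - (P t * (Q t)⁻¹) * M₁₂ t * (P t * (Q t)⁻¹)) i j) t) := by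
  simp only [← hasDerivAt_matrix_iff, ← continuousOn_matrix_iff] at hQ hP ⊢
  exact radon_lemma_general hQ hP hQ0 hP0 hinv
end

section
/- Let (F,G) : J → ℝ² be a C¹ solution of G' = F − 4FG, F' = −F² − G on an interval J with G(t) < 1/4 and F(t) > 0 for all t ∈ J. Set M(t) = √(1 − 4G(t)) and let C₄ be the constant value of (1 + M² + 4F²)/(4M) on J. Then for any real constants C₂, C₃, the function P(t) := −(C₂·(2C₄ − M(t)) − C₃·√(4C₄·M(t) − 1 − M(t)²)) / √(M(t)) is C² and satisfies P'' + (1 − 3G(t))·P = 0 on J. -/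
/-!
Since `M' = -2FM`, dividing by `√M` turns `d/dt` into `d/dt + F`: `(y/√M)' = (y' + Fy)/√M`. The
first integral reads `4C₄M - 1 - M² = (2F)²`, so `P` is a combination of `u = (2C₄ - M)/√M` and
`v = 2|F|/√M`. Two applications of the rule give `u' = F(2C₄ + M)/√M`, `v' = -2 sign(F) G/√M`, and
`u'' = -(1 - 3G)u`, `v'' = -(1 - 3G)v`. The first integral is only available on `J`, which need not
be a neighbourhood of its points, so `v'` is computed from the square root itself.
-/

open SignType (sign)

theorem hasDerivAt_sign_mul {f y : ℝ → ℝ} {y' t : ℝ} (hf : ContinuousAt f t) (hft : f t ≠ 0)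
    (hy : HasDerivAt y y' t) :
    HasDerivAt (fun s => (sign (f s) : ℝ) * y s) (sign (f t) * y') t := by
  have hsign : ∀ᶠ s in nhds t, sign (f s) = sign (f t) :=
    ((continuousAt_sign_of_ne_zero hft).comp hf).eventually_mem (s := {sign (f t)}) (by simp)
  refine (hy.const_mul (sign (f t) : ℝ)).congr_of_eventuallyEq ?_
  filter_upwards [hsign] with s hs
  rw [hs]

theorem hasDerivAt_sqrt_one_sub_four_mul {G : ℝ → ℝ} {f t : ℝ}
    (hG : HasDerivAt G (f - 4 * f * G t) t) (hG4 : G t < 1 / 4) :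
    HasDerivAt (fun s => √(1 - 4 * G s)) (-2 * f * √(1 - 4 * G t)) t := by
  have hpos : 0 < 1 - 4 * G t := by linarith
  have hsqrt : √(1 - 4 * G t) ≠ 0 := (Real.sqrt_pos.2 hpos).ne'
  refine (((hG.const_mul 4).const_sub 1).sqrt hpos.ne').congr_deriv ?_
  field_simp
  linear_combination 4 * f * Real.sq_sqrt hpos.le

theorem four_mul_sub_one_sub_sq_eq_two_mul_sq {m f C : ℝ} (hm : m ≠ 0)
    (hC : (1 + m ^ 2 + 4 * f ^ 2) / (4 * m) = C) :
    4 * C * m - 1 - m ^ 2 = (2 * f) ^ 2 := by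
  rw [div_eq_iff (by positivity)] at hC
  linear_combination -hC

section

variable {M : ℝ → ℝ} {f t : ℝ} (hM : HasDerivAt M (-2 * f * M t) t)
include hM

theorem hasDerivAt_sqrt_four_mul_sub_one_sub_sq {C : ℝ} (hf : f ≠ 0)
    (hC : 4 * C * M t - 1 - M t ^ 2 = (2 * f) ^ 2) :
    HasDerivAt (fun s => √(4 * C * M s - 1 - M s ^ 2)) (-(sign f * ((2 * C - M t) * M t))) t := by
  have hradicand : HasDerivAt (fun s => 4 * C * M s - 1 - M s ^ 2)
      (-(4 * f * ((2 * C - M t) * M t))) t := by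
    refine (((hM.const_mul (4 * C)).sub_const 1).sub (hM.pow 2)).congr_deriv ?_
    push_cast
    ring
  refine (hradicand.sqrt (by rw [hC]; positivity)).congr_deriv ?_
  rw [hC, Real.sqrt_sq_eq_abs, abs_mul, abs_two]
  rw [div_eq_iff (by positivity)]
  linear_combination 4 * (2 * C - M t) * M t * sign_mul_abs f

variable (hpos : 0 < M t)
include hpos

theorem hasDerivAt_div_sqrt {y : ℝ → ℝ} {y' : ℝ} (hy : HasDerivAt y y' t) :
    HasDerivAt (fun s => y s / √(M s)) ((y' + f * y t) / √(M t)) t := by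
  have hsqrt : √(M t) ≠ 0 := (Real.sqrt_pos.2 hpos).ne'
  refine (hy.div (hM.sqrt hpos.ne') hsqrt).congr_deriv ?_
  field_simp
  linear_combination -f * y t * Real.sq_sqrt hpos.le

theorem hasDerivAt_two_mul_sub_div_sqrt (C : ℝ) :
    HasDerivAt (fun s => (2 * C - M s) / √(M s)) (f * (2 * C + M t) / √(M t)) t := by
  convert hasDerivAt_div_sqrt hM hpos (hM.const_sub (2 * C)) using 2
  ring

theorem hasDerivAt_sqrt_four_mul_sub_one_sub_sq_div_sqrt {g C : ℝ} (hf : f ≠ 0)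
    (hMsq : M t ^ 2 = 1 - 4 * g) (hC : 4 * C * M t - 1 - M t ^ 2 = (2 * f) ^ 2) :
    HasDerivAt (fun s => √(4 * C * M s - 1 - M s ^ 2) / √(M s))
      (sign f * (-2 * g / √(M t))) t := by
  convert hasDerivAt_div_sqrt hM hpos (hasDerivAt_sqrt_four_mul_sub_one_sub_sq hM hf hC) using 1
  rw [← mul_div_assoc, hC, Real.sqrt_sq_eq_abs, abs_mul, abs_two, ← sign_mul_self f]
  congr 1
  linear_combination (sign f : ℝ) / 2 * (hC - hMsq)

theorem hasDerivAt_neg_two_mul_div_sqrt {G : ℝ → ℝ} (hG : HasDerivAt G (f - 4 * f * G t) t) :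
    HasDerivAt (fun s => -2 * G s / √(M s)) (-(1 - 3 * G t) * (2 * f / √(M t))) t := by
  convert hasDerivAt_div_sqrt hM hpos (hG.const_mul (-2)) using 1
  ring

end

theorem hasDerivAt_mul_two_mul_add_div_sqrt {F M : ℝ → ℝ} {g C t : ℝ}
    (hM : HasDerivAt M (-2 * F t * M t) t) (hpos : 0 < M t)
    (hF : HasDerivAt F (-(F t) ^ 2 - g) t)
    (hMsq : M t ^ 2 = 1 - 4 * g) (hC : 4 * C * M t - 1 - M t ^ 2 = (2 * F t) ^ 2) :
    HasDerivAt (fun s => F s * (2 * C + M s) / √(M s))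
      (-(1 - 3 * g) * ((2 * C - M t) / √(M t))) t := by
  refine (hasDerivAt_div_sqrt hM hpos (hF.mul (hM.const_add (2 * C)))).congr_deriv ?_
  rw [← mul_div_assoc]
  congr 1
  simp only [Pi.mul_apply]
  linear_combination M t / 2 * hC + (M t / 2 - 2 * C) * hMsq

theorem explicit_solutions_of_hill_equation_general
    (J : Set ℝ)
    (F G : ℝ → ℝ)
    (hG : ∀ t ∈ J, HasDerivAt G (F t - 4 * F t * G t) t)
    (hF : ∀ t ∈ J, HasDerivAt F (-(F t) ^ 2 - G t) t)
    (hG4 : ∀ t ∈ J, G t < 1 / 4)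
    (hF0 : ∀ t ∈ J, F t ≠ 0)
    (M : ℝ → ℝ) (hM : ∀ t, M t = √(1 - 4 * G t))
    (C₄ : ℝ) (hC₄ : ∀ t ∈ J, (1 + (M t) ^ 2 + 4 * (F t) ^ 2) / (4 * M t) = C₄)
    (C₂ C₃ : ℝ)
    (P : ℝ → ℝ)
    (hP : ∀ t, P t =
      -((C₂ * (2 * C₄ - M t) - C₃ * √(4 * C₄ * M t - 1 - (M t) ^ 2))
        / √(M t))) :
    ∃ P' P'' : ℝ → ℝ,
      (∀ t ∈ J, HasDerivAt P (P' t) t) ∧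
      (∀ t ∈ J, HasDerivAt P' (P'' t) t) ∧
      (∀ t ∈ J, P'' t + (1 - 3 * G t) * P t = 0) := by
  have hrad : ∀ t ∈ J, 0 < 1 - 4 * G t := fun t ht => by linarith [hG4 t ht]
  have hMpos : ∀ t ∈ J, 0 < M t := fun t ht => hM t ▸ Real.sqrt_pos.2 (hrad t ht)
  have hMsq : ∀ t ∈ J, M t ^ 2 = 1 - 4 * G t := fun t ht => hM t ▸ Real.sq_sqrt (hrad t ht).le
  have hM' : ∀ t ∈ J, HasDerivAt M (-2 * F t * M t) t := fun t ht => funext hM ▸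
    hasDerivAt_sqrt_one_sub_four_mul (hG t ht) (hG4 t ht)
  have hC : ∀ t ∈ J, 4 * C₄ * M t - 1 - M t ^ 2 = (2 * F t) ^ 2 := fun t ht =>
    four_mul_sub_one_sub_sq_eq_two_mul_sq (hMpos t ht).ne' (hC₄ t ht)
  have hP_comb : P = fun t => C₃ * (√(4 * C₄ * M t - 1 - M t ^ 2) / √(M t))
      - C₂ * ((2 * C₄ - M t) / √(M t)) := by
    ext t
    rw [hP]
    ring
  refine ⟨fun t => C₃ * (sign (F t) * (-2 * G t / √(M t))) - C₂ * (F t * (2 * C₄ + M t) / √(M t)),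
    fun t => -(1 - 3 * G t) * P t, fun t ht => ?_, fun t ht => ?_, fun t _ => by ring⟩
  · have hv := hasDerivAt_sqrt_four_mul_sub_one_sub_sq_div_sqrt (hM' t ht) (hMpos t ht) (hF0 t ht)
      (hMsq t ht) (hC t ht)
    have hu := hasDerivAt_two_mul_sub_div_sqrt (hM' t ht) (hMpos t ht) C₄
    exact hP_comb ▸ (hv.const_mul C₃).sub (hu.const_mul C₂)
  · have hv' := hasDerivAt_sign_mul (hF t ht).continuousAt (hF0 t ht)
      (hasDerivAt_neg_two_mul_div_sqrt (hM' t ht) (hMpos t ht) (hG t ht))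
    have hu' := hasDerivAt_mul_two_mul_add_div_sqrt (hM' t ht) (hMpos t ht) (hF t ht)
      (hMsq t ht) (hC t ht)
    refine ((hv'.const_mul C₃).sub (hu'.const_mul C₂)).congr_deriv ?_
    simp only [hP_comb, hC t ht, Real.sqrt_sq_eq_abs, abs_mul, abs_two, ← sign_mul_self (F t)]
    ring

/-- Along a solution of `G' = F − 4FG`, `F' = −F² − G` with `G < 1/4` and
`F > 0`, setting `M = √(1 − 4G)` and `C₄` the constant value of `(1 + M² + 4F²)/(4M)`,
for any constants `C₂, C₃` the function
`P = −(C₂(2C₄ − M) − C₃√(4C₄M − 1 − M²))/√M` is C² and satisfies `P'' + (1 − 3G)P = 0`. -/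
theorem explicit_solutions_of_hill_equation
    (J : Set ℝ) (hJ : J.OrdConnected)
    (F G : ℝ → ℝ)
    (hG : ∀ t ∈ J, HasDerivAt G (F t - 4 * F t * G t) t)
    (hF : ∀ t ∈ J, HasDerivAt F (-(F t) ^ 2 - G t) t)
    (hG4 : ∀ t ∈ J, G t < 1 / 4)
    (hFpos : ∀ t ∈ J, 0 < F t)
    (M : ℝ → ℝ) (hM : ∀ t, M t = Real.sqrt (1 - 4 * G t))
    (C₄ : ℝ) (hC₄ : ∀ t ∈ J, (1 + (M t) ^ 2 + 4 * (F t) ^ 2) / (4 * M t) = C₄)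
    (C₂ C₃ : ℝ)
    (P : ℝ → ℝ)
    (hP : ∀ t, P t =
      -((C₂ * (2 * C₄ - M t) - C₃ * Real.sqrt (4 * C₄ * M t - 1 - (M t) ^ 2))
        / Real.sqrt (M t))) :
    ∃ P' P'' : ℝ → ℝ,
      (∀ t ∈ J, HasDerivAt P (P' t) t) ∧
      (∀ t ∈ J, HasDerivAt P' (P'' t) t) ∧
      (∀ t ∈ J, P'' t + (1 - 3 * G t) * P t = 0) :=
  explicit_solutions_of_hill_equation_general J F G hG hF hG4 (fun t ht => (hFpos t ht).ne')
    M hM C₄ hC₄ C₂ C₃ P hP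
end

section
/- Let (F₀, G₀) ∈ ℝ² with G₀ < 1/4, let (F,G) be the (global, 2π-periodic) solution of G' = F − 4FG, F' = −F² − G with F(0) = F₀, G(0) = G₀, and let (u₀, v₀) ∈ ℝ². Let (q, p₁, p₂) be the solution on ℝ of the linear system q' = p₁, p₁' = −2F·p₁ − p₂, p₂' = (1 − 4G)·p₁ − 4F·p₂ with q(0) = 1, p₁(0) = u₀, p₂(0) = v₀. Then the maximal solution of the Riccati system u' = −u² − 2F·u − v, v' = −u·v + (1 − 4G)·u − 4F·v with u(0) = u₀, v(0) = v₀ is defined on all of [0, ∞) if and only if q(t) > 0 for every t ∈ [0, 2π]; and if q(t₀) ≤ 0 for some t₀ ∈ (0, 2π], then the maximal solution of the Riccati system exists only up to some finite time T* < 2π. -/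
/-! A Riccati equation `U' = M U - ℓ(U) U` is the projective form of the linear system `q' = ℓ(p)`,
`p' = M p`: its solution is `U = p / q`, and it exists on an interval exactly as long as `q` stays
positive there. Indeed, given any solution `U`, the defect `p - q U` solves a homogeneous linear
equation, so `p = q U` and `q' = ℓ(U) q`, whence `q` cannot vanish.

It remains to see that `q` is `2π`-periodic. Put `s = √(1 - 4G)` and `r = p₂ / s²`. Then `r' = p₁`,
so `q - r` is constant, and the pair `(r, p₁ / s)` rotates with angular speed `s`. So does the
`2π`-periodic pair `((F² + G) / s, F)`, and two solutions of the same rotation differ by a constant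
linear map. If this reference pair vanishes, then `s = 1` and `(sin, cos)` takes its place. -/

open Set Filter

lemma eq_of_forall_hasDerivAt_zero {𝕜 E : Type*} [RCLike 𝕜] [NormedAddCommGroup E]
    [NormedSpace 𝕜 E] {f : 𝕜 → E} (hf : ∀ t, HasDerivAt f 0 t) (a b : 𝕜) : f a = f b :=
  is_const_of_deriv_eq_zero (fun t => (hf t).differentiableAt) (fun t => (hf t).deriv) a b

lemma hasDerivWithinAt_prodMk_iff {𝕜 E E' : Type*} [NontriviallyNormedField 𝕜]
    [NormedAddCommGroup E] [NormedSpace 𝕜 E] [NormedAddCommGroup E'] [NormedSpace 𝕜 E']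
    {f : 𝕜 → E} {g : 𝕜 → E'} {f' : E} {g' : E'} {s : Set 𝕜} {t : 𝕜} :
    HasDerivWithinAt (fun x => (f x, g x)) (f', g') s t ↔
      HasDerivWithinAt f f' s t ∧ HasDerivWithinAt g g' s t :=
  ⟨fun h => ⟨by simpa using h.hasFDerivWithinAt.fst.hasDerivWithinAt,
    by simpa using h.hasFDerivWithinAt.snd.hasDerivWithinAt⟩, fun h => h.1.prodMk h.2⟩

section LinearEquation

variable {E : Type*} [NormedAddCommGroup E] [NormedSpace ℝ E]

lemma eqOn_zero_of_hasDerivWithinAt_clm_apply_s13 {A : ℝ → E →L[ℝ] E} {f : ℝ → E} {s : Set ℝ} {a : ℝ}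
    (hs : s.OrdConnected) (hA : ContinuousOn A s)
    (hf : ∀ t ∈ s, HasDerivWithinAt f (A t (f t)) s t) (ha : a ∈ s) (hfa : f a = 0) :
    EqOn f 0 s := by
  have lipschitz_bound : ∀ {b c}, Icc b c ⊆ s →
      ∃ K, ∀ t ∈ Icc b c, LipschitzOnWith K (A t) univ := fun {b c} hbc => by
    obtain ⟨C, hC⟩ := isCompact_Icc.exists_bound_of_continuousOn (hA.mono hbc)
    exact ⟨C.toNNReal, fun t ht => ((A t).lipschitz.weaken
      (NNReal.le_toNNReal_of_coe_le (hC t ht))).lipschitzOnWith⟩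
  have hfc : ContinuousOn f s := fun t ht => (hf t ht).continuousWithinAt
  intro t ht
  rcases le_total a t with hat | hta
  · have hsub : Icc a t ⊆ s := hs.out ha ht
    obtain ⟨K, hK⟩ := lipschitz_bound hsub
    exact ODE_solution_unique_of_mem_Icc_right (fun x hx => hK x (Ico_subset_Icc_self hx))
      (hfc.mono hsub)
      (fun x hx => (hf x (hsub (Ico_subset_Icc_self hx))).mono_of_mem_nhdsWithin
        (mem_of_superset (Icc_mem_nhdsGE_of_mem hx) hsub))
      (fun _ _ => mem_univ _) continuousOn_const
      (fun x _ => (hasDerivWithinAt_const x _ 0).congr_deriv (map_zero (A x)).symm)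
      (fun _ _ => mem_univ _) hfa (right_mem_Icc.2 hat)
  · have hsub : Icc t a ⊆ s := hs.out ht ha
    obtain ⟨K, hK⟩ := lipschitz_bound hsub
    exact ODE_solution_unique_of_mem_Icc_left (fun x hx => hK x (Ioc_subset_Icc_self hx))
      (hfc.mono hsub)
      (fun x hx => (hf x (hsub (Ioc_subset_Icc_self hx))).mono_of_mem_nhdsWithin
        (mem_of_superset (Icc_mem_nhdsLE_of_mem hx) hsub))
      (fun _ _ => mem_univ _) continuousOn_const
      (fun x _ => (hasDerivWithinAt_const x _ 0).congr_deriv (map_zero (A x)).symm)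
      (fun _ _ => mem_univ _) hfa (left_mem_Icc.2 hta)

end LinearEquation

section RadonLinearization

variable {E : Type*} [NormedAddCommGroup E] [NormedSpace ℝ E]

/-- `U` solves the vector Riccati equation `U' = M U - ℓ(U) U` on `s`, with one-sided derivatives
at the end points of `s`. -/
def IsRiccatiSolutionOn (M : ℝ → E →L[ℝ] E) (ℓ : ℝ → E →L[ℝ] ℝ) (U : ℝ → E) (s : Set ℝ) : Prop :=
  ∀ t ∈ s, HasDerivWithinAt U (M t (U t) - ℓ t (U t) • U t) s t

/-- `(q, p)` solves on `s` the linear system `q' = ℓ(p)`, `p' = M p`, the Radon linearization of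
the Riccati equation `IsRiccatiSolutionOn M ℓ`. -/
structure IsRadonSolutionOn (M : ℝ → E →L[ℝ] E) (ℓ : ℝ → E →L[ℝ] ℝ) (q : ℝ → ℝ) (p : ℝ → E)
    (s : Set ℝ) : Prop where
  hasDerivWithinAt_denom : ∀ t ∈ s, HasDerivWithinAt q (ℓ t (p t)) s t
  hasDerivWithinAt_num : ∀ t ∈ s, HasDerivWithinAt p (M t (p t)) s t

namespace IsRadonSolutionOn

variable {M : ℝ → E →L[ℝ] E} {ℓ : ℝ → E →L[ℝ] ℝ} {q : ℝ → ℝ} {p U : ℝ → E} {s : Set ℝ} {a : ℝ}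

lemma isRiccatiSolutionOn_inv_smul (h : IsRadonSolutionOn M ℓ q p s) (hq : ∀ t ∈ s, q t ≠ 0) :
    IsRiccatiSolutionOn M ℓ (fun t => (q t)⁻¹ • p t) s := fun t ht => by
  refine (((h.hasDerivWithinAt_denom t ht).fun_inv (hq t ht)).smul
    (h.hasDerivWithinAt_num t ht)).congr_deriv ?_
  simp only [map_smul, smul_smul, smul_eq_mul, sub_eq_add_neg, ← neg_smul]
  congr 2
  have := hq t ht
  field_simp

lemma eqOn_smul (h : IsRadonSolutionOn M ℓ q p s) (hs : s.OrdConnected) (hM : ContinuousOn M s)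
    (hℓ : ContinuousOn ℓ s) (hU : IsRiccatiSolutionOn M ℓ U s) (ha : a ∈ s)
    (hUa : p a = q a • U a) : EqOn p (fun t => q t • U t) s := by
  have hUc : ContinuousOn U s := fun t ht => (hU t ht).continuousWithinAt
  have defect_deriv : ∀ t ∈ s, HasDerivWithinAt (fun t => p t - q t • U t)
      ((M t - (ℓ t).smulRight (U t)) (p t - q t • U t)) s t := fun t ht => by
    refine ((h.hasDerivWithinAt_num t ht).fun_sub
      ((h.hasDerivWithinAt_denom t ht).smul (hU t ht))).congr_deriv ?_
    simp only [sub_apply, ContinuousLinearMap.smulRight_apply, map_sub, map_smul]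
    module
  have coeff_cont : ContinuousOn (fun t => M t - (ℓ t).smulRight (U t)) s :=
    hM.sub (((ContinuousLinearMap.smulRightL ℝ E E).continuous.comp_continuousOn hℓ).clm_apply hUc)
  have defect_zero := eqOn_zero_of_hasDerivWithinAt_clm_apply_s13 hs coeff_cont defect_deriv ha
    (sub_eq_zero.2 hUa)
  exact fun t ht => sub_eq_zero.1 (defect_zero ht)

lemma pos_of_isRiccatiSolutionOn (h : IsRadonSolutionOn M ℓ q p s) (hs : s.OrdConnected)
    (hM : ContinuousOn M s) (hℓ : ContinuousOn ℓ s) (hU : IsRiccatiSolutionOn M ℓ U s)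
    (ha : a ∈ s) (hUa : p a = q a • U a) (hqa : 0 < q a) : ∀ t ∈ s, 0 < q t := by
  have hqc : ContinuousOn q s := fun t ht => (h.hasDerivWithinAt_denom t ht).continuousWithinAt
  have hUc : ContinuousOn U s := fun t ht => (hU t ht).continuousWithinAt
  have q_deriv : ∀ t ∈ s, HasDerivWithinAt q
      ((ℓ t (U t) • ContinuousLinearMap.id ℝ ℝ) (q t)) s t := fun t ht =>
    (h.hasDerivWithinAt_denom t ht).congr_deriv <| by
      simp [h.eqOn_smul hs hM hℓ hU ha hUa ht, mul_comm]
  have q_ne_zero : ∀ t ∈ s, q t ≠ 0 := fun t ht hqt =>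
    hqa.ne' <| eqOn_zero_of_hasDerivWithinAt_clm_apply_s13 hs
      ((hℓ.clm_apply hUc).smul continuousOn_const) q_deriv ht hqt ha
  intro t ht
  by_contra! hqt
  obtain ⟨x, hx, hqx⟩ := hs.isPreconnected.intermediate_value ht ha hqc ⟨hqt, hqa.le⟩
  exact q_ne_zero x hx hqx

theorem exists_isRiccatiSolutionOn_iff (h : IsRadonSolutionOn M ℓ q p s) (hs : s.OrdConnected)
    (hM : ContinuousOn M s) (hℓ : ContinuousOn ℓ s) (ha : a ∈ s) (hqa : 0 < q a) :
    (∃ U, p a = q a • U a ∧ IsRiccatiSolutionOn M ℓ U s) ↔ ∀ t ∈ s, 0 < q t :=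
  ⟨fun ⟨_, hUa, hU⟩ => h.pos_of_isRiccatiSolutionOn hs hM hℓ hU ha hUa hqa,
    fun hq => ⟨fun t => (q t)⁻¹ • p t, (smul_inv_smul₀ hqa.ne' _).symm,
      h.isRiccatiSolutionOn_inv_smul fun t ht => (hq t ht).ne'⟩⟩

end IsRadonSolutionOn

end RadonLinearization

/-- The point `(x, y)` rotates about the origin with variable angular speed `s`: `x' = s y` and
`y' = -s x`. -/
structure IsRotation (s x y : ℝ → ℝ) : Prop where
  hasDerivAt_fst : ∀ t, HasDerivAt x (s t * y t) t
  hasDerivAt_snd : ∀ t, HasDerivAt y (-(s t * x t)) t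

namespace IsRotation

variable {s x₁ y₁ x₂ y₂ : ℝ → ℝ}

lemma sin_cos : IsRotation (fun _ => 1) Real.sin Real.cos where
  hasDerivAt_fst t := by simpa using Real.hasDerivAt_sin t
  hasDerivAt_snd t := by simpa using Real.hasDerivAt_cos t

lemma inner_eq (h₁ : IsRotation s x₁ y₁) (h₂ : IsRotation s x₂ y₂) (a b : ℝ) :
    x₁ a * x₂ a + y₁ a * y₂ a = x₁ b * x₂ b + y₁ b * y₂ b :=
  eq_of_forall_hasDerivAt_zero (f := fun t => x₁ t * x₂ t + y₁ t * y₂ t)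
    (fun t => (((h₁.hasDerivAt_fst t).mul (h₂.hasDerivAt_fst t)).add
      ((h₁.hasDerivAt_snd t).mul (h₂.hasDerivAt_snd t))).congr_deriv (by ring)) a b

lemma wronskian_eq (h₁ : IsRotation s x₁ y₁) (h₂ : IsRotation s x₂ y₂) (a b : ℝ) :
    x₁ a * y₂ a - y₁ a * x₂ a = x₁ b * y₂ b - y₁ b * x₂ b :=
  eq_of_forall_hasDerivAt_zero (f := fun t => x₁ t * y₂ t - y₁ t * x₂ t)
    (fun t => (((h₁.hasDerivAt_fst t).mul (h₂.hasDerivAt_snd t)).sub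
      ((h₁.hasDerivAt_snd t).mul (h₂.hasDerivAt_fst t))).congr_deriv (by ring)) a b

lemma periodic_fst {T a : ℝ} (h₁ : IsRotation s x₁ y₁) (h₂ : IsRotation s x₂ y₂)
    (hx₁ : Function.Periodic x₁ T) (hy₁ : Function.Periodic y₁ T)
    (ha : x₁ a ^ 2 + y₁ a ^ 2 ≠ 0) : Function.Periodic x₂ T := by
  intro t
  have hinner := h₁.inner_eq h₂ (t + T) t
  have hwronskian := h₁.wronskian_eq h₂ (t + T) t
  rw [hx₁, hy₁] at hinner hwronskian
  have hne : x₁ t ^ 2 + y₁ t ^ 2 ≠ 0 := by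
    simpa only [sq, h₁.inner_eq h₁ a t] using ha
  refine mul_left_cancel₀ hne ?_
  linear_combination x₁ t * hinner - y₁ t * hwronskian

end IsRotation

/-- The operator `(u, v) ↦ (-2Fu - v, (1 - 4G)u - 4Fv)`, the linear part of the Riccati system
along a characteristic; the quadratic part is `-u • (u, v)`, so that the functional `ℓ` of
`IsRiccatiSolutionOn` is the first projection. -/
def radonOperator (F G : ℝ) : ℝ × ℝ →L[ℝ] ℝ × ℝ :=
  ((-2 * F) • ContinuousLinearMap.fst ℝ ℝ ℝ - ContinuousLinearMap.snd ℝ ℝ ℝ).prod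
    ((1 - 4 * G) • ContinuousLinearMap.fst ℝ ℝ ℝ - (4 * F) • ContinuousLinearMap.snd ℝ ℝ ℝ)

lemma radonOperator_apply (F G : ℝ) (w : ℝ × ℝ) :
    radonOperator F G w = (-2 * F * w.1 - w.2, (1 - 4 * G) * w.1 - 4 * F * w.2) := rfl

section RiccatiSystem

variable {F G q p₁ p₂ : ℝ → ℝ}

lemma continuous_radonOperator (hF : Continuous F) (hG : Continuous G) :
    Continuous fun t => radonOperator (F t) (G t) :=
  continuous_clm_apply.2 fun w => by
    simp only [radonOperator_apply]
    fun_prop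

lemma isRiccatiSolutionOn_radonOperator_iff {U : ℝ → ℝ × ℝ} {s : Set ℝ} :
    IsRiccatiSolutionOn (fun t => radonOperator (F t) (G t))
        (fun _ => ContinuousLinearMap.fst ℝ ℝ ℝ) U s ↔
      ∀ t ∈ s,
        HasDerivWithinAt (fun t => (U t).1)
          (-(U t).1 ^ 2 - 2 * F t * (U t).1 - (U t).2) s t ∧
        HasDerivWithinAt (fun t => (U t).2)
          (-(U t).1 * (U t).2 + (1 - 4 * G t) * (U t).1 - 4 * F t * (U t).2) s t := by
  refine forall₂_congr fun t _ => ?_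
  rw [← hasDerivWithinAt_prodMk_iff]
  refine iff_of_eq (congrArg (HasDerivWithinAt U · s t) ?_)
  ext <;> simp [radonOperator_apply] <;> ring

theorem exists_riccati_solution_iff {s : Set ℝ} {a : ℝ} (hs : s.OrdConnected) (ha : a ∈ s)
    (hFc : Continuous F) (hGc : Continuous G) (hq : ∀ t, HasDerivAt q (p₁ t) t)
    (hp₁ : ∀ t, HasDerivAt p₁ (-2 * F t * p₁ t - p₂ t) t)
    (hp₂ : ∀ t, HasDerivAt p₂ ((1 - 4 * G t) * p₁ t - 4 * F t * p₂ t) t) (hqa : q a = 1) :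
    (∃ u v : ℝ → ℝ, u a = p₁ a ∧ v a = p₂ a ∧ ∀ t ∈ s,
        HasDerivWithinAt u (-(u t) ^ 2 - 2 * F t * u t - v t) s t ∧
        HasDerivWithinAt v (-(u t) * v t + (1 - 4 * G t) * u t - 4 * F t * v t) s t) ↔
      ∀ t ∈ s, 0 < q t := by
  have hRadon : IsRadonSolutionOn (fun t => radonOperator (F t) (G t))
      (fun _ => ContinuousLinearMap.fst ℝ ℝ ℝ) q (fun t => (p₁ t, p₂ t)) s :=
    ⟨fun t _ => (hq t).hasDerivWithinAt, fun t _ => ((hp₁ t).prodMk (hp₂ t)).hasDerivWithinAt⟩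
  rw [← hRadon.exists_isRiccatiSolutionOn_iff hs (continuous_radonOperator hFc hGc).continuousOn
    continuousOn_const ha (hqa ▸ one_pos)]
  simp only [isRiccatiSolutionOn_radonOperator_iff, hqa, one_smul]
  constructor
  · rintro ⟨u, v, hu, hv, huv⟩
    exact ⟨fun t => (u t, v t), Prod.ext hu.symm hv.symm, huv⟩
  · rintro ⟨U, hU, hUs⟩
    exact ⟨fun t => (U t).1, fun t => (U t).2, congrArg Prod.fst hU.symm, congrArg Prod.snd hU.symm,
      hUs⟩

end RiccatiSystem

/-- `(F, G)` solves the characteristic system of the 4-dimensional Euler–Poisson equations. -/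
structure IsCharacteristicSolution (F G : ℝ → ℝ) : Prop where
  hasDerivAt_fst : ∀ t, HasDerivAt F (-(F t) ^ 2 - G t) t
  hasDerivAt_snd : ∀ t, HasDerivAt G (F t - 4 * F t * G t) t

namespace IsCharacteristicSolution

variable {F G q p₁ p₂ : ℝ → ℝ}

lemma continuous_fst (h : IsCharacteristicSolution F G) : Continuous F :=
  continuous_iff_continuousAt.2 fun t => (h.hasDerivAt_fst t).continuousAt

lemma continuous_snd (h : IsCharacteristicSolution F G) : Continuous G :=
  continuous_iff_continuousAt.2 fun t => (h.hasDerivAt_snd t).continuousAt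

lemma hasDerivAt_sqrt (h : IsCharacteristicSolution F G) {t : ℝ} (ht : G t < 1 / 4) :
    HasDerivAt (fun t => √(1 - 4 * G t)) (-2 * F t * √(1 - 4 * G t)) t := by
  have hpos : 0 < 1 - 4 * G t := by linarith
  have hne : √(1 - 4 * G t) ≠ 0 := (Real.sqrt_pos.2 hpos).ne'
  refine (((h.hasDerivAt_snd t).const_mul 4).const_sub 1 |>.sqrt hpos.ne').congr_deriv ?_
  field_simp
  rw [Real.sq_sqrt hpos.le]
  ring

lemma isRotation (h : IsCharacteristicSolution F G) (hG : ∀ t, G t < 1 / 4) :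
    IsRotation (fun t => √(1 - 4 * G t)) (fun t => (F t ^ 2 + G t) / √(1 - 4 * G t)) F := by
  have hpos : ∀ t, 0 < 1 - 4 * G t := fun t => by linarith [hG t]
  have hne : ∀ t, √(1 - 4 * G t) ≠ 0 := fun t => (Real.sqrt_pos.2 (hpos t)).ne'
  refine ⟨fun t => ?_, fun t => (h.hasDerivAt_fst t).congr_deriv ?_⟩
  · have numerator_deriv : HasDerivAt (fun t => F t ^ 2 + G t)
        (F t * (1 - 4 * G t) - 2 * F t * (F t ^ 2 + G t)) t :=
      (((h.hasDerivAt_fst t).fun_pow 2).fun_add (h.hasDerivAt_snd t)).congr_deriv (by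
        push_cast
        ring)
    refine (numerator_deriv.fun_div (h.hasDerivAt_sqrt (hG t)) (hne t)).congr_deriv ?_
    rw [← Real.sq_sqrt (hpos t).le, Real.sqrt_sq (Real.sqrt_nonneg _)]
    have := hne t
    field_simp
    ring
  · rw [mul_div_cancel₀ _ (hne t)]
    ring

lemma hasDerivAt_radon_div (h : IsCharacteristicSolution F G)
    (hp₂ : ∀ t, HasDerivAt p₂ ((1 - 4 * G t) * p₁ t - 4 * F t * p₂ t) t) {t : ℝ}
    (ht : G t < 1 / 4) : HasDerivAt (fun t => p₂ t / (1 - 4 * G t)) (p₁ t) t := by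
  have hne : 1 - 4 * G t ≠ 0 := by linarith
  refine ((hp₂ t).fun_div (((h.hasDerivAt_snd t).const_mul 4).const_sub 1) hne).congr_deriv ?_
  field_simp
  ring

lemma isRotation_radon (h : IsCharacteristicSolution F G) (hG : ∀ t, G t < 1 / 4)
    (hp₁ : ∀ t, HasDerivAt p₁ (-2 * F t * p₁ t - p₂ t) t)
    (hp₂ : ∀ t, HasDerivAt p₂ ((1 - 4 * G t) * p₁ t - 4 * F t * p₂ t) t) :
    IsRotation (fun t => √(1 - 4 * G t)) (fun t => p₂ t / (1 - 4 * G t))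
      (fun t => p₁ t / √(1 - 4 * G t)) := by
  have hpos : ∀ t, 0 < 1 - 4 * G t := fun t => by linarith [hG t]
  have hne : ∀ t, √(1 - 4 * G t) ≠ 0 := fun t => (Real.sqrt_pos.2 (hpos t)).ne'
  refine ⟨fun t => (h.hasDerivAt_radon_div hp₂ (hG t)).congr_deriv (mul_div_cancel₀ _ (hne t)).symm,
    fun t => ((hp₁ t).fun_div (h.hasDerivAt_sqrt (hG t)) (hne t)).congr_deriv ?_⟩
  have := hne t
  have := (hpos t).ne'
  field_simp
  rw [Real.sq_sqrt (hpos t).le]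
  ring

lemma exists_periodic_isRotation (h : IsCharacteristicSolution F G) (hG : ∀ t, G t < 1 / 4)
    (hFper : Function.Periodic F (2 * Real.pi)) (hGper : Function.Periodic G (2 * Real.pi)) :
    ∃ x y, IsRotation (fun t => √(1 - 4 * G t)) x y ∧ Function.Periodic x (2 * Real.pi) ∧
      Function.Periodic y (2 * Real.pi) ∧ ∃ a, x a ^ 2 + y a ^ 2 ≠ 0 := by
  by_cases hne : ∃ a, ((F a ^ 2 + G a) / √(1 - 4 * G a)) ^ 2 + F a ^ 2 ≠ 0
  · exact ⟨_, F, h.isRotation hG, fun t => by simp only [hFper t, hGper t], hFper, hne⟩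
  · push Not at hne
    have hspeed : (fun t => √(1 - 4 * G t)) = fun _ => 1 := funext fun t => by
      have hs : √(1 - 4 * G t) ≠ 0 := (Real.sqrt_pos.2 (by linarith [hG t])).ne'
      obtain ⟨hx, hF⟩ := (add_eq_zero_iff_of_nonneg (sq_nonneg _) (sq_nonneg _)).1 (hne t)
      have hsum : F t ^ 2 + G t = 0 :=
        (div_eq_zero_iff.1 (pow_eq_zero_iff two_ne_zero |>.1 hx)).resolve_right hs
      simp [show G t = 0 by linarith]
    rw [hspeed]
    exact ⟨Real.sin, Real.cos, .sin_cos, Real.sin_periodic, Real.cos_periodic, 0, by simp⟩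

theorem periodic_radon_denom (h : IsCharacteristicSolution F G) (hG : ∀ t, G t < 1 / 4)
    (hFper : Function.Periodic F (2 * Real.pi)) (hGper : Function.Periodic G (2 * Real.pi))
    (hq : ∀ t, HasDerivAt q (p₁ t) t)
    (hp₁ : ∀ t, HasDerivAt p₁ (-2 * F t * p₁ t - p₂ t) t)
    (hp₂ : ∀ t, HasDerivAt p₂ ((1 - 4 * G t) * p₁ t - 4 * F t * p₂ t) t) :
    Function.Periodic q (2 * Real.pi) := by
  obtain ⟨x, y, hxy, hx, hy, a, ha⟩ := h.exists_periodic_isRotation hG hFper hGper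
  have hr := hxy.periodic_fst (h.isRotation_radon hG hp₁ hp₂) hx hy ha
  have hdiff : ∀ t, HasDerivAt (fun t => q t - p₂ t / (1 - 4 * G t)) 0 t := fun t =>
    ((hq t).fun_sub (h.hasDerivAt_radon_div hp₂ (hG t))).congr_deriv (sub_self _)
  intro t
  linarith [eq_of_forall_hasDerivAt_zero hdiff (t + 2 * Real.pi) t, hr t]

end IsCharacteristicSolution

/-- With `(F, G)` the global `2π`-periodic solution of the characteristic
system (data `G₀ < 1/4`) and `(q, p₁, p₂)` the solution of its Radon linearization with
`q(0) = 1`, `p₁(0) = u₀`, `p₂(0) = v₀`: the Riccati system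
`u' = −u² − 2Fu − v`, `v' = −uv + (1 − 4G)u − 4Fv` with data `(u₀, v₀)` has a global
solution on `[0, ∞)` iff `q > 0` on `[0, 2π]`; and if `q(t₀) ≤ 0` for some
`t₀ ∈ (0, 2π]`, then solutions exist only up to some time `T* < 2π`. -/
theorem riccati_blowup_criterion_via_q
    (F₀ G₀ u₀ v₀ : ℝ) (hG₀ : G₀ < 1 / 4)
    (F G : ℝ → ℝ)
    (hG : ∀ t, HasDerivAt G (F t - 4 * F t * G t) t)
    (hF : ∀ t, HasDerivAt F (-(F t) ^ 2 - G t) t)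
    (hF0 : F 0 = F₀) (hG0 : G 0 = G₀)
    (hGlt : ∀ t, G t < 1 / 4)
    (hper : ∀ t, F (t + 2 * Real.pi) = F t ∧ G (t + 2 * Real.pi) = G t)
    (q p₁ p₂ : ℝ → ℝ)
    (hq : ∀ t, HasDerivAt q (p₁ t) t)
    (hp₁ : ∀ t, HasDerivAt p₁ (-2 * F t * p₁ t - p₂ t) t)
    (hp₂ : ∀ t, HasDerivAt p₂ ((1 - 4 * G t) * p₁ t - 4 * F t * p₂ t) t)
    (hq0 : q 0 = 1) (hp₁0 : p₁ 0 = u₀) (hp₂0 : p₂ 0 = v₀) :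
    ((∃ u v : ℝ → ℝ, u 0 = u₀ ∧ v 0 = v₀ ∧
        ∀ t ∈ Set.Ici (0:ℝ),
          HasDerivWithinAt u (-(u t) ^ 2 - 2 * F t * u t - v t) (Set.Ici 0) t ∧
          HasDerivWithinAt v (-(u t) * v t + (1 - 4 * G t) * u t - 4 * F t * v t)
            (Set.Ici 0) t)
      ↔ ∀ t ∈ Set.Icc (0:ℝ) (2 * Real.pi), 0 < q t) ∧
    ((∃ t₀ ∈ Set.Ioc (0:ℝ) (2 * Real.pi), q t₀ ≤ 0) →
      ∃ Tstar : ℝ, 0 < Tstar ∧ Tstar < 2 * Real.pi ∧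
        ∀ T : ℝ, (∃ u v : ℝ → ℝ, u 0 = u₀ ∧ v 0 = v₀ ∧
            ∀ t ∈ Set.Ico (0:ℝ) T,
              HasDerivWithinAt u (-(u t) ^ 2 - 2 * F t * u t - v t) (Set.Ico 0 T) t ∧
              HasDerivWithinAt v (-(u t) * v t + (1 - 4 * G t) * u t - 4 * F t * v t)
                (Set.Ico 0 T) t) →
          T ≤ Tstar) := by
  subst hp₁0 hp₂0
  have hFG : IsCharacteristicSolution F G := ⟨hF, hG⟩
  have hqper : Function.Periodic q (2 * Real.pi) :=
    hFG.periodic_radon_denom hGlt (fun t => (hper t).1) (fun t => (hper t).2) hq hp₁ hp₂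
  have solvable_iff {s : Set ℝ} (hs : s.OrdConnected) (h0 : 0 ∈ s) :=
    exists_riccati_solution_iff hs h0 hFG.continuous_fst hFG.continuous_snd hq hp₁ hp₂ hq0
  refine ⟨(solvable_iff ordConnected_Ici self_mem_Ici).trans ⟨fun hpos t ht => hpos t ht.1,
    fun hpos t _ => ?_⟩, ?_⟩
  · obtain ⟨y, hy, hty⟩ := hqper.exists_mem_Ico₀ Real.two_pi_pos t
    exact hty ▸ hpos y (Ico_subset_Icc_self hy)
  · rintro ⟨t₀, ⟨ht₀_pos, ht₀_le⟩, hqt₀⟩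
    have hq2π : q (2 * Real.pi) = 1 := hqper.eq.trans hq0
    have ht₀_ne : t₀ ≠ 2 * Real.pi := by
      rintro rfl
      linarith
    refine ⟨t₀, ht₀_pos, ht₀_le.lt_of_ne ht₀_ne, fun T hT => ?_⟩
    by_contra! ht₀T
    have hpos := (solvable_iff ordConnected_Ico ⟨le_rfl, ht₀_pos.trans ht₀T⟩).1 hT
    exact hqt₀.not_gt (hpos t₀ ⟨ht₀_pos.le, ht₀T⟩)
end

section
/- There exists ε > 0 such that for all (F₀, G₀, u₀, v₀) ∈ ℝ⁴ with |F₀| < ε, |G₀| < ε, |u₀| < ε, |v₀| < ε, the maximal solution (F, G, u, v) of the coupled system G' = F − 4FG, F' = −F² − G, u' = −u² − 2F·u − v, v' = −u·v + (1 − 4G)·u − 4F·v with initial data (F₀, G₀, u₀, v₀) at t = 0 is defined on all of [0, ∞) and is bounded. -/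
/-!
The system is linearised by `2F = S'/S` and `u + 2F = P'/P`: in terms of `S` and `P` it becomes
`S'' = a - S` and `P'' = α - P` with constants `a` and `α`. Every solution of such an equation is
`X = a + b cos t + c sin t`, and its energy `2aX - X'² - X²` is the constant `a² - b² - c²`. If `q`
is the energy of `S` and `p` the value at `(S, P)` of the polarised energy, then
`1 - 4G = q / S²` and `1 - 4G - v = p / (S P)`.

Where `X` vanishes the energy is `-X'² ≤ 0`, so positive energy forbids zeros. With
`S 0 = P 0 = 1` the energies of `S` and `P` are `1 - 4 G₀` and `1 - 4 G₀ - 2 v₀ - u₀²`; when both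
are positive, `F, G, u, v` are global and `2π`-periodic, hence bounded.
-/

/-- A solution, on all of `ℝ`, of the coupled characteristic–Riccati system: along one
characteristic of a radial flow in dimension 4, `F = V/r`, `G = E/r`, `u = div V - 4F` and
`v = div E - 4G`. -/
structure IsCharacteristicRiccatiSolution (F G u v : ℝ → ℝ) : Prop where
  hasDerivAt_G : ∀ t, HasDerivAt G (F t - 4 * F t * G t) t
  hasDerivAt_F : ∀ t, HasDerivAt F (-(F t) ^ 2 - G t) t
  hasDerivAt_u : ∀ t, HasDerivAt u (-(u t) ^ 2 - 2 * F t * u t - v t) t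
  hasDerivAt_v : ∀ t, HasDerivAt v (-(u t) * v t + (1 - 4 * G t) * u t - 4 * F t * v t) t

theorem IsCharacteristicRiccatiSolution.exists_abs_le_of_periodic {F G u v : ℝ → ℝ} {T : ℝ}
    (h : IsCharacteristicRiccatiSolution F G u v)
    (hper : Function.Periodic (fun t => (F t, G t, u t, v t)) T) (hT : T ≠ 0) :
    ∃ C : ℝ, ∀ t, |F t| ≤ C ∧ |G t| ≤ C ∧ |u t| ≤ C ∧ |v t| ≤ C := by
  have hF : Continuous F := continuous_iff_continuousAt.2 fun t => (h.hasDerivAt_F t).continuousAt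
  have hG : Continuous G := continuous_iff_continuousAt.2 fun t => (h.hasDerivAt_G t).continuousAt
  have hu : Continuous u := continuous_iff_continuousAt.2 fun t => (h.hasDerivAt_u t).continuousAt
  have hv : Continuous v := continuous_iff_continuousAt.2 fun t => (h.hasDerivAt_v t).continuousAt
  obtain ⟨C, hC⟩ := (hper.isBounded_of_continuous hT (by fun_prop)).exists_norm_le
  exact ⟨C, fun t => by simpa only [norm_prod_le_iff, Real.norm_eq_abs] using hC _ ⟨t, rfl⟩⟩

section Linearisation

variable {S S' P P' : ℝ → ℝ} {a α q p t : ℝ}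

theorem hasDerivAt_one_sub_div_sq (hS : HasDerivAt S (S' t) t) (hS0 : S t ≠ 0) :
    HasDerivAt (fun s => (1 - q / S s ^ 2) / 4) (S' t / (2 * S t) * (q / S t ^ 2)) t := by
  refine ((((hasDerivAt_const t q).fun_div (hS.fun_pow 2) (pow_ne_zero 2 hS0)).const_sub
    1).div_const 4).congr_deriv ?_
  field_simp
  ring

theorem hasDerivAt_half_logDeriv (hS : HasDerivAt S (S' t) t) (hS' : HasDerivAt S' (a - S t) t)
    (hS0 : S t ≠ 0) (hq : 2 * a * S t - S' t ^ 2 - S t ^ 2 = q) :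
    HasDerivAt (fun s => S' s / (2 * S s))
      (-(S' t / (2 * S t)) ^ 2 - (1 - q / S t ^ 2) / 4) t := by
  refine (hS'.fun_div (hS.const_mul 2) (mul_ne_zero two_ne_zero hS0)).congr_deriv ?_
  rw [← hq]
  field_simp
  ring

theorem hasDerivAt_logDeriv_sub_logDeriv
    (hS : HasDerivAt S (S' t) t) (hS' : HasDerivAt S' (a - S t) t)
    (hP : HasDerivAt P (P' t) t) (hP' : HasDerivAt P' (α - P t) t)
    (hS0 : S t ≠ 0) (hP0 : P t ≠ 0) (hq : 2 * a * S t - S' t ^ 2 - S t ^ 2 = q)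
    (hp : a * P t + α * S t - S' t * P' t - S t * P t = p) :
    HasDerivAt (fun s => P' s / P s - S' s / S s)
      (-(P' t / P t - S' t / S t) ^ 2 - 2 * (S' t / (2 * S t)) * (P' t / P t - S' t / S t)
        - (q / S t ^ 2 - p / (S t * P t))) t := by
  refine ((hP'.fun_div hP hP0).fun_sub (hS'.fun_div hS hS0)).congr_deriv ?_
  rw [← hq, ← hp]
  field_simp
  ring

theorem hasDerivAt_div_sq_sub_div_mul (hS : HasDerivAt S (S' t) t) (hP : HasDerivAt P (P' t) t)
    (hS0 : S t ≠ 0) (hP0 : P t ≠ 0) :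
    HasDerivAt (fun s => q / S s ^ 2 - p / (S s * P s))
      ((P' t / P t - S' t / S t) * (p / (S t * P t))
        - 4 * (S' t / (2 * S t)) * (q / S t ^ 2 - p / (S t * P t))) t := by
  refine (((hasDerivAt_const t q).fun_div (hS.fun_pow 2) (pow_ne_zero 2 hS0)).fun_sub
    ((hasDerivAt_const t p).fun_div (hS.fun_mul hP) (mul_ne_zero hS0 hP0))).congr_deriv ?_
  field_simp
  ring

theorem isCharacteristicRiccatiSolution_of_linear
    (hS : ∀ t, HasDerivAt S (S' t) t) (hS' : ∀ t, HasDerivAt S' (a - S t) t)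
    (hP : ∀ t, HasDerivAt P (P' t) t) (hP' : ∀ t, HasDerivAt P' (α - P t) t)
    (hS0 : ∀ t, S t ≠ 0) (hP0 : ∀ t, P t ≠ 0)
    (hq : ∀ t, 2 * a * S t - S' t ^ 2 - S t ^ 2 = q)
    (hp : ∀ t, a * P t + α * S t - S' t * P' t - S t * P t = p) :
    IsCharacteristicRiccatiSolution
      (fun t => S' t / (2 * S t)) (fun t => (1 - q / S t ^ 2) / 4)
      (fun t => P' t / P t - S' t / S t) (fun t => q / S t ^ 2 - p / (S t * P t)) where
  hasDerivAt_G t := (hasDerivAt_one_sub_div_sq (hS t) (hS0 t)).congr_deriv (by ring)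
  hasDerivAt_F t := hasDerivAt_half_logDeriv (hS t) (hS' t) (hS0 t) (hq t)
  hasDerivAt_u t := hasDerivAt_logDeriv_sub_logDeriv (hS t) (hS' t) (hP t) (hP' t)
    (hS0 t) (hP0 t) (hq t) (hp t)
  hasDerivAt_v t :=
    (hasDerivAt_div_sq_sub_div_mul (hS t) (hP t) (hS0 t) (hP0 t)).congr_deriv (by ring)

end Linearisation

/-- The general solution of `y'' = a - y`. Its derivative is `shiftedOscillator 0 c (-b)`. -/
noncomputable def shiftedOscillator (a b c t : ℝ) : ℝ :=
  a + b * Real.cos t + c * Real.sin t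

section Oscillation

variable (a b c α β γ t : ℝ)

theorem shiftedOscillator_apply_zero : shiftedOscillator a b c 0 = a + b := by
  simp [shiftedOscillator]

theorem periodic_shiftedOscillator :
    Function.Periodic (shiftedOscillator a b c) (2 * Real.pi) := fun t => by
  simp only [shiftedOscillator, Real.cos_add_two_pi, Real.sin_add_two_pi]

theorem hasDerivAt_shiftedOscillator :
    HasDerivAt (shiftedOscillator a b c) (shiftedOscillator 0 c (-b) t) t :=
  ((((Real.hasDerivAt_cos t).const_mul b).const_add a).add
    ((Real.hasDerivAt_sin t).const_mul c)).congr_deriv (by simp only [shiftedOscillator]; ring)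

theorem hasDerivAt_shiftedOscillator_deriv :
    HasDerivAt (shiftedOscillator 0 c (-b)) (a - shiftedOscillator a b c t) t :=
  (hasDerivAt_shiftedOscillator 0 c (-b) t).congr_deriv (by simp only [shiftedOscillator]; ring)

/-- The polarised form of the energy `2aX - X'² - X²`. -/
theorem shiftedOscillator_energy_pairing :
    a * shiftedOscillator α β γ t + α * shiftedOscillator a b c t
        - shiftedOscillator 0 c (-b) t * shiftedOscillator 0 γ (-β) t
        - shiftedOscillator a b c t * shiftedOscillator α β γ t = a * α - b * β - c * γ := by
  simp only [shiftedOscillator]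
  linear_combination -(b * β + c * γ) * Real.sin_sq_add_cos_sq t

theorem shiftedOscillator_energy :
    2 * a * shiftedOscillator a b c t - shiftedOscillator 0 c (-b) t ^ 2
        - shiftedOscillator a b c t ^ 2 = a ^ 2 - b ^ 2 - c ^ 2 := by
  linear_combination shiftedOscillator_energy_pairing a b c a b c t

variable {a b c}

theorem shiftedOscillator_ne_zero (h : b ^ 2 + c ^ 2 < a ^ 2) : shiftedOscillator a b c t ≠ 0 := by
  intro h0
  have energy := shiftedOscillator_energy a b c t
  rw [h0] at energy
  linarith [sq_nonneg (shiftedOscillator 0 c (-b) t)]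

end Oscillation

theorem global_smoothness_near_trivial_equilibrium_general (F₀ : ℝ) {G₀ u₀ v₀ : ℝ}
    (hG₀ : 4 * G₀ < 1) (huv₀ : 4 * G₀ + 2 * v₀ + u₀ ^ 2 < 1) :
    ∃ F G u v : ℝ → ℝ,
      F 0 = F₀ ∧ G 0 = G₀ ∧ u 0 = u₀ ∧ v 0 = v₀ ∧
      IsCharacteristicRiccatiSolution F G u v ∧
      Function.Periodic (fun t => (F t, G t, u t, v t)) (2 * Real.pi) := by
  -- `a` and `α` are read off the system at `t = 0`: `a = S 0 + S'' 0` and `α = P 0 + P'' 0`.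
  let a := 1 + 2 * F₀ ^ 2 - 2 * G₀
  let α := 1 + 2 * F₀ ^ 2 - 2 * G₀ + 2 * F₀ * u₀ - v₀
  let b := 1 - a
  let c := 2 * F₀
  let β := 1 - α
  let γ := u₀ + 2 * F₀
  have hS_energy : b ^ 2 + c ^ 2 < a ^ 2 := by linarith
  have hP_energy : β ^ 2 + γ ^ 2 < α ^ 2 := by linarith
  refine ⟨_, _, _, _, ?_, ?_, ?_, ?_, isCharacteristicRiccatiSolution_of_linear
    (hasDerivAt_shiftedOscillator a b c) (hasDerivAt_shiftedOscillator_deriv a b c)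
    (hasDerivAt_shiftedOscillator α β γ) (hasDerivAt_shiftedOscillator_deriv α β γ)
    (fun t => shiftedOscillator_ne_zero t hS_energy)
    (fun t => shiftedOscillator_ne_zero t hP_energy)
    (shiftedOscillator_energy a b c) (shiftedOscillator_energy_pairing a b c α β γ),
    fun t => ?periodic⟩
  case periodic => simp only [periodic_shiftedOscillator _ _ _ t]
  all_goals
    simp only [shiftedOscillator_apply_zero, a, b, c, α, β, γ]
    ring

/-- There is a neighborhood of the trivial equilibrium such that the coupled
characteristic–Riccati system `G' = F − 4FG`, `F' = −F² − G`, `u' = −u² − 2Fu − v`,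
`v' = −uv + (1 − 4G)u − 4Fv` has, for all data in that neighborhood, a solution defined
and bounded on all of `[0, ∞)`. -/
theorem global_smoothness_near_trivial_equilibrium :
    ∃ ε : ℝ, 0 < ε ∧
      ∀ F₀ G₀ u₀ v₀ : ℝ, |F₀| < ε → |G₀| < ε → |u₀| < ε → |v₀| < ε →
        ∃ F G u v : ℝ → ℝ,
          F 0 = F₀ ∧ G 0 = G₀ ∧ u 0 = u₀ ∧ v 0 = v₀ ∧
          (∀ t ∈ Set.Ici (0:ℝ),
            HasDerivWithinAt G (F t - 4 * F t * G t) (Set.Ici 0) t ∧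
            HasDerivWithinAt F (-(F t) ^ 2 - G t) (Set.Ici 0) t ∧
            HasDerivWithinAt u (-(u t) ^ 2 - 2 * F t * u t - v t) (Set.Ici 0) t ∧
            HasDerivWithinAt v (-(u t) * v t + (1 - 4 * G t) * u t - 4 * F t * v t)
              (Set.Ici 0) t) ∧
          ∃ C : ℝ, ∀ t ∈ Set.Ici (0:ℝ),
            |F t| ≤ C ∧ |G t| ≤ C ∧ |u t| ≤ C ∧ |v t| ≤ C := by
  refine ⟨1 / 8, by norm_num, fun F₀ G₀ u₀ v₀ _ hG₀ hu₀ hv₀ => ?_⟩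
  have hu₀_sq : u₀ ^ 2 < (1 / 8) ^ 2 := sq_lt_sq' (neg_lt_of_abs_lt hu₀) (lt_of_abs_lt hu₀)
  have hS_energy : 4 * G₀ < 1 := by linarith [lt_of_abs_lt hG₀]
  have hP_energy : 4 * G₀ + 2 * v₀ + u₀ ^ 2 < 1 := by
    linarith [lt_of_abs_lt hG₀, lt_of_abs_lt hv₀]
  obtain ⟨F, G, u, v, hF, hG, hu, hv, hsol, hper⟩ :=
    global_smoothness_near_trivial_equilibrium_general F₀ hS_energy hP_energy
  obtain ⟨C, hC⟩ := hsol.exists_abs_le_of_periodic hper Real.two_pi_pos.ne'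
  exact ⟨F, G, u, v, hF, hG, hu, hv, fun t _ =>
    ⟨(hsol.hasDerivAt_G t).hasDerivWithinAt, (hsol.hasDerivAt_F t).hasDerivWithinAt,
      (hsol.hasDerivAt_u t).hasDerivWithinAt, (hsol.hasDerivAt_v t).hasDerivWithinAt⟩,
    C, fun t _ => hC t⟩
end
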